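/- arXiv:2409.12552 — 2 statements merged into one kernel-verified Lean document; each statement's English description precedes it below -/
import Mathlib

section
/- Let n ≥ 5. The centralizer in A[B_n] of the subgroup generated by t_0, t_1, …, t_{n−1} is equal to the center of A[B_n]. -/
/-- The defining relators of the Artin group of type `Bₙ`, as elements of the free
group on `n` generators (0-indexed: generator `i` corresponds to `r_{i+1}`). -/
def BnRels (n : ℕ) : Set (FreeGroup (Fin n)) :=
  {w | (∃ i j : Fin n, (i : ℕ) + 1 = (j : ℕ) ∧ (j : ℕ) + 1 < n ∧
          w = FreeGroup.of i * FreeGroup.of j * FreeGroup.of i *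
              (FreeGroup.of j * FreeGroup.of i * FreeGroup.of j)⁻¹) ∨
       (∃ i j : Fin n, (i : ℕ) + 2 = n ∧ (j : ℕ) + 1 = n ∧
          w = FreeGroup.of i * FreeGroup.of j * FreeGroup.of i * FreeGroup.of j *
              (FreeGroup.of j * FreeGroup.of i * FreeGroup.of j * FreeGroup.of i)⁻¹) ∨
       (∃ i j : Fin n, (i : ℕ) + 2 ≤ (j : ℕ) ∧
          w = FreeGroup.of i * FreeGroup.of j * (FreeGroup.of j * FreeGroup.of i)⁻¹)}

/-- The Artin group `A[Bₙ]` of type `Bₙ`. -/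
abbrev ArtinB (n : ℕ) := PresentedGroup (BnRels n)

/-- The standard generator `r_i` (1-indexed, `1 ≤ i ≤ n`). -/
def rB (n i : ℕ) : ArtinB n :=
  if h : i - 1 < n then PresentedGroup.of ⟨i - 1, h⟩ else 1

/-- `ρ_B = r_1 r_2 ⋯ r_n`. -/
def ρB (n : ℕ) : ArtinB n := ((List.range n).map fun i => rB n (i + 1)).prod

/-- `Δ_B = ρ_B ^ n`, the generator of the center. -/
def ΔB (n : ℕ) : ArtinB n := ρB n ^ n

/-- `t_i` for `i` read modulo `n`: `t_i = r_i` for `1 ≤ i ≤ n-1`,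
and `t_0 = ρ_B r_{n-1} ρ_B⁻¹`. -/
def tB (n i : ℕ) : ArtinB n :=
  if i % n = 0 then ρB n * rB n (n - 1) * (ρB n)⁻¹ else rB n (i % n)

/-- `Δ_Y = (t_1⋯t_{n-1})(t_1⋯t_{n-2})⋯(t_1t_2)t_1`, the Garside element of the
parabolic subgroup of type `A_{n-1}`. -/
def ΔY (n : ℕ) : ArtinB n :=
  ((List.range (n - 1)).map fun k =>
    ((List.range (n - 1 - k)).map fun i => rB n (i + 1)).prod).prod

/-- `ρ_0 = t_1 t_2 ⋯ t_{n-1}`. -/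
def ρ₀B (n : ℕ) : ArtinB n := ((List.range (n - 1)).map fun i => rB n (i + 1)).prod

/-- `ρ_1 = t_1⁻¹ t_2⁻¹ ⋯ t_{n-1}⁻¹`. -/
def ρ₁B (n : ℕ) : ArtinB n := ((List.range (n - 1)).map fun i => (rB n (i + 1))⁻¹).prod

/-- `ρ_k` for `k ∈ {0,1}`. -/
def ρkB (n k : ℕ) : ArtinB n := if k = 0 then ρ₀B n else ρ₁B n

/-- `v_k = ρ_k t_{n-1} ρ_k⁻¹` for `k ∈ {0,1}`. -/
def vB (n k : ℕ) : ArtinB n := ρkB n k * rB n (n - 1) * (ρkB n k)⁻¹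

/-- `δ = r_{n-1} r_{n-2} ⋯ r_2 r_1² r_2 ⋯ r_{n-2} r_{n-1}`. -/
def δB (n : ℕ) : ArtinB n :=
  ((List.range (n - 2)).map fun i => rB n (n - 1 - i)).prod * rB n 1 ^ 2 *
  ((List.range (n - 2)).map fun i => rB n (i + 2)).prod

/-- The quotient `Ā = A[Bₙ]/Z(A[Bₙ])`. -/
abbrev AbarB (n : ℕ) := ArtinB n ⧸ Subgroup.center (ArtinB n)

/-- The canonical projection `π : A[Bₙ] → Ā`. -/
def πB (n : ℕ) : ArtinB n →* AbarB n := QuotientGroup.mk' (Subgroup.center (ArtinB n))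

/-- `t̄_i = π(t_i)`. -/
def tbar (n i : ℕ) : AbarB n := πB n (tB n i)

/-- `ρ̄_B = π(ρ_B)`. -/
def ρbar (n : ℕ) : AbarB n := πB n (ρB n)

/-- The composition `conj_x ∘ φ` of an endomorphism with an inner automorphism. -/
def conjComp {G : Type*} [Group G] (x : G) (φ : G →* G) : G →* G :=
  (MulAut.conj x).toMonoidHom.comp φ

/-- Type (1): there are commuting `g, h` with `φ(t_i) = g` for all `0 ≤ i ≤ n-1`
and `φ(ρ_B) = h`. -/
def IsType1 (n : ℕ) (φ : ArtinB n →* ArtinB n) : Prop :=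
  ∃ g h : ArtinB n, g * h = h * g ∧ (∀ i < n, φ (tB n i) = g) ∧ φ (ρB n) = h

/-- Type (2a) with parameters `ε ∈ {1,-1}`, `p q : ℤ`. -/
def IsType2a (n : ℕ) (ε p q : ℤ) (φ : ArtinB n →* ArtinB n) : Prop :=
  (ε = 1 ∨ ε = -1) ∧ (∀ i < n, φ (tB n i) = tB n i ^ ε * ΔB n ^ p) ∧
    φ (ρB n) = ρB n * ΔB n ^ q

/-- Type (2b) with parameters `ε ∈ {1,-1}`, `p q : ℤ`. -/
def IsType2b (n : ℕ) (ε p q : ℤ) (φ : ArtinB n →* ArtinB n) : Prop :=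
  (ε = 1 ∨ ε = -1) ∧ (∀ i < n, φ (tB n i) = tB n (n - i) ^ ε * ΔB n ^ p) ∧
    φ (ρB n) = (ρB n)⁻¹ * ΔB n ^ q

/-- Type (3) with parameters `ε ∈ {1,-1}`, `k ∈ {0,1}`, `p q r s : ℤ`. -/
def IsType3 (n : ℕ) (ε : ℤ) (k : ℕ) (p q r s : ℤ) (φ : ArtinB n →* ArtinB n) : Prop :=
  (ε = 1 ∨ ε = -1) ∧ (k = 0 ∨ k = 1) ∧
    (∀ i, 1 ≤ i → i ≤ n - 1 → φ (tB n i) = tB n i ^ ε * ΔY n ^ (2 * p) * ΔB n ^ q) ∧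
    φ (tB n 0) = vB n k ^ ε * ΔY n ^ (2 * p) * ΔB n ^ q ∧
    φ (ρB n) = ρkB n k * ΔY n ^ (2 * r) * ΔB n ^ s

open scoped commutatorElement

section FreeGroupFacts

/-- If a reduced word does not begin with a power of the basis element `a`, then it commutes with
`a` only when it is empty. -/
theorem FreeGroup.eq_one_of_commute_of_head_ne {ι : Type*} [DecidableEq ι] {a : ι}
    {u : FreeGroup ι} (h : Commute (FreeGroup.of a) u)
    (hne : ∀ p ∈ u.toWord.head?, p.1 ≠ a) : u = 1 := by
  rcases hL : u.toWord with _ | ⟨p, L⟩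
  · exact FreeGroup.toWord_eq_nil_iff.1 hL
  exfalso
  have hp : p.1 ≠ a := hne p (by simp [hL])
  have hred : FreeGroup.IsReduced (p :: L) := hL ▸ FreeGroup.isReduced_toWord
  have hred' : FreeGroup.IsReduced ((a, true) :: p :: L) := by
    rw [FreeGroup.isReduced_cons_cons]
    exact ⟨fun h => absurd h.symm hp, hred⟩
  have hu : u = FreeGroup.mk (p :: L) := by rw [← hL, FreeGroup.mk_toWord]
  have h1 : (FreeGroup.of a * u).toWord = (a, true) :: p :: L := by
    rw [hu, FreeGroup.of, FreeGroup.mul_mk, FreeGroup.toWord_mk]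
    exact hred'.reduce_eq
  have h2 : (u * FreeGroup.of a).toWord = FreeGroup.reduce (p :: L ++ [(a, true)]) := by
    rw [hu, FreeGroup.of, FreeGroup.mul_mk, FreeGroup.toWord_mk]
  have h3 : FreeGroup.Red (p :: L ++ [(a, true)]) ((a, true) :: p :: L) := by
    rw [← h1, h.eq, h2]
    exact FreeGroup.reduce.red
  have h4 := h3.sublist.eq_of_length (by simp)
  simp only [List.cons_append, List.cons.injEq] at h4
  exact hp (by rw [← h4.1])

theorem FreeGroup.eq_one_of_commute_of_of {ι : Type*} {a b : ι} (hab : a ≠ b) {u : FreeGroup ι}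
    (ha : Commute (FreeGroup.of a) u) (hb : Commute (FreeGroup.of b) u) : u = 1 := by
  classical
  by_cases h : ∀ p ∈ u.toWord.head?, p.1 ≠ a
  · exact FreeGroup.eq_one_of_commute_of_head_ne ha h
  · push Not at h
    obtain ⟨p, hp, rfl⟩ := h
    refine FreeGroup.eq_one_of_commute_of_head_ne hb fun q hq => ?_
    rw [Option.mem_unique hq hp]
    exact hab

/-- The endomorphism of the free group sending `x₁, x₂` to `x₁⁻¹ x₀, x₂⁻¹ x₀` and fixing the other
basis elements. -/
def basisChange : FreeGroup ℕ →* FreeGroup ℕ :=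
  FreeGroup.lift fun k => if k = 1 ∨ k = 2 then (FreeGroup.of k)⁻¹ * FreeGroup.of 0
    else FreeGroup.of k

/-- A left inverse of `basisChange`. -/
def basisChangeInv : FreeGroup ℕ →* FreeGroup ℕ :=
  FreeGroup.lift fun k => if k = 1 ∨ k = 2 then FreeGroup.of 0 * (FreeGroup.of k)⁻¹
    else FreeGroup.of k

theorem basisChange_injective : Function.Injective basisChange := by
  have h : basisChangeInv.comp basisChange = MonoidHom.id _ := by
    ext k
    by_cases hk : k = 1 ∨ k = 2 <;> simp [basisChange, basisChangeInv, hk]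
  exact Function.LeftInverse.injective (g := basisChangeInv) fun x => DFunLike.congr_fun h x

theorem FreeGroup.eq_one_of_commute_of_mul_inv {u : FreeGroup ℕ}
    (h1 : Commute (FreeGroup.of 0 * (FreeGroup.of 1)⁻¹) u)
    (h2 : Commute (FreeGroup.of 0 * (FreeGroup.of 2)⁻¹) u) : u = 1 := by
  apply basisChange_injective
  rw [_root_.map_one basisChange]
  apply FreeGroup.eq_one_of_commute_of_of (a := 1) (b := 2) (by decide)
  · simpa [basisChange] using h1.map basisChange
  · simpa [basisChange] using h2.map basisChange

/-- The value on basis elements of the Artin automorphism exchanging `x_i` and `x_{i+1}`. -/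
def artinFun (i k : ℕ) : FreeGroup ℕ :=
  if k = i then FreeGroup.of (i + 1)
  else if k = i + 1 then (FreeGroup.of (i + 1))⁻¹ * FreeGroup.of i * FreeGroup.of (i + 1)
  else FreeGroup.of k

/-- The value on basis elements of the inverse of the Artin automorphism. -/
def artinInvFun (i k : ℕ) : FreeGroup ℕ :=
  if k = i then FreeGroup.of i * FreeGroup.of (i + 1) * (FreeGroup.of i)⁻¹
  else if k = i + 1 then FreeGroup.of i
  else FreeGroup.of k

/-- The Artin automorphism of the free group, `x_i ↦ x_{i+1}`, `x_{i+1} ↦ x_{i+1}⁻¹ x_i x_{i+1}`. -/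
def artinAut (i : ℕ) : MulAut (FreeGroup ℕ) :=
  MonoidHom.toMulEquiv (FreeGroup.lift (artinFun i)) (FreeGroup.lift (artinInvFun i))
    (by
      ext k
      by_cases h1 : k = i
      · simp [artinFun, artinInvFun, h1]
      by_cases h2 : k = i + 1
      · simp [artinFun, artinInvFun, h2, mul_assoc]
      · simp [artinFun, artinInvFun, h1, h2])
    (by
      ext k
      by_cases h1 : k = i
      · simp [artinFun, artinInvFun, h1, mul_assoc]
      by_cases h2 : k = i + 1
      · simp [artinFun, artinInvFun, h2]
      · simp [artinFun, artinInvFun, h1, h2])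

theorem artinAut_of (i k : ℕ) : artinAut i (FreeGroup.of k) = artinFun i k := by
  simp [artinAut]

theorem artinAut_self (i : ℕ) :
    artinAut i (FreeGroup.of i) = FreeGroup.of (i + 1) := by
  simp [artinAut_of, artinFun]

theorem artinAut_succ (i : ℕ) : artinAut i (FreeGroup.of (i + 1)) =
    (FreeGroup.of (i + 1))⁻¹ * FreeGroup.of i * FreeGroup.of (i + 1) := by
  simp [artinAut_of, artinFun]

theorem artinAut_of_ne {i k : ℕ} (h1 : k ≠ i) (h2 : k ≠ i + 1) :
    artinAut i (FreeGroup.of k) = FreeGroup.of k := by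
  simp [artinAut_of, artinFun, h1, h2]

theorem MulAut.freeGroup_ext {ι : Type*} {f g : MulAut (FreeGroup ι)}
    (h : ∀ k, f (FreeGroup.of k) = g (FreeGroup.of k)) : f = g := by
  have : f.toMonoidHom = g.toMonoidHom := FreeGroup.ext_hom _ _ h
  ext x
  exact DFunLike.congr_fun this x

theorem artinAut_braid (i : ℕ) :
    artinAut i * artinAut (i + 1) * artinAut i =
      artinAut (i + 1) * artinAut i * artinAut (i + 1) := by
  apply MulAut.freeGroup_ext
  intro k
  have e1 := artinAut_self i
  have e2 := artinAut_succ i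
  have e3 : artinAut i (FreeGroup.of (i + 1 + 1)) = _ :=
    artinAut_of_ne (by omega) (by omega)
  have f1 : artinAut (i + 1) (FreeGroup.of i) = _ :=
    artinAut_of_ne (by omega) (by omega)
  have f2 := artinAut_self (i + 1)
  have f3 := artinAut_succ (i + 1)
  simp only [MulAut.mul_apply]
  by_cases h1 : k = i
  · subst h1; simp [e1, e3, f1, f2]
  by_cases h2 : k = i + 1
  · subst h2; simp [e1, e2, e3, f1, f2, f3, mul_assoc]
  by_cases h3 : k = i + 1 + 1
  · subst h3; simp [e2, e3, f1, f2, f3, mul_assoc]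
  · simp [artinAut_of_ne h1 h2, artinAut_of_ne h2 h3]

theorem artinAut_commute {i j : ℕ} (h : i + 2 ≤ j) :
    artinAut i * artinAut j = artinAut j * artinAut i := by
  apply MulAut.freeGroup_ext
  intro k
  have e1 := artinAut_self i
  have e2 := artinAut_succ i
  have e3 := artinAut_self j
  have e4 := artinAut_succ j
  have f1 := artinAut_of_ne (i := i) (k := j) (by omega) (by omega)
  have f2 := artinAut_of_ne (i := i) (k := j + 1) (by omega) (by omega)
  have f3 := artinAut_of_ne (i := j) (k := i) (by omega) (by omega)
  have f4 := artinAut_of_ne (i := j) (k := i + 1) (by omega) (by omega)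
  simp only [MulAut.mul_apply]
  by_cases h1 : k = i
  · subst h1; simp [e1, f3, f4]
  by_cases h2 : k = i + 1
  · subst h2; simp [e2, f3, f4]
  by_cases h3 : k = j
  · subst h3; simp [e3, f1, f2]
  by_cases h4 : k = j + 1
  · subst h4; simp [e4, f1, f2]
  · simp [artinAut_of_ne h1 h2, artinAut_of_ne h3 h4]

end FreeGroupFacts

section TypeBSequences

/-- A sequence satisfying, in its first `n` terms, the relations of the standard generators of
type `Bₙ`, numbered so that the special generator comes first. -/
structure IsTypeBSeq {G : Type*} [Group G] (n : ℕ) (a : ℕ → G) : Prop where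
  four : 1 < n → a 0 * a 1 * a 0 * a 1 = a 1 * a 0 * a 1 * a 0
  braid : ∀ i, i + 2 < n → a (i + 1) * a (i + 2) * a (i + 1) = a (i + 2) * a (i + 1) * a (i + 2)
  comm : ∀ i j, i + 2 ≤ j → j < n → a i * a j = a j * a i

/-- The homomorphism from the Artin group of type `Bₙ` determined by a sequence satisfying the
defining relations. -/
def typeBLift {G : Type*} [Group G] {n : ℕ} {a : ℕ → G} (h : IsTypeBSeq n a) : ArtinB n →* G :=
  PresentedGroup.toGroup (f := fun i : Fin n => a (n - 1 - i)) (by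
    rintro w (⟨i, j, hij, hj, rfl⟩ | ⟨i, j, hi, hj, rfl⟩ | ⟨i, j, hij, rfl⟩)
    · have := h.braid (n - 1 - j - 1) (by omega)
      have e1 : n - 1 - (i : ℕ) = n - 1 - j - 1 + 2 := by omega
      have e2 : n - 1 - (j : ℕ) = n - 1 - j - 1 + 1 := by omega
      rw [← e1, ← e2] at this
      rw [map_mul, map_inv, mul_inv_eq_one]
      simpa using this.symm
    · have := h.four (by omega)
      have e1 : n - 1 - (i : ℕ) = 1 := by omega
      have e2 : n - 1 - (j : ℕ) = 0 := by omega
      rw [map_mul, map_inv, mul_inv_eq_one]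
      simpa [e1, e2] using this.symm
    · have := h.comm (n - 1 - j) (n - 1 - i) (by omega) (by omega)
      rw [map_mul, map_inv, mul_inv_eq_one]
      simpa using this.symm)

theorem typeBLift_rB {G : Type*} [Group G] {n : ℕ} {a : ℕ → G} (h : IsTypeBSeq n a) {k : ℕ}
    (hk : k < n) : typeBLift h (rB n (n - k)) = a k := by
  have h1 : n - k - 1 < n := by omega
  rw [rB, dif_pos h1, typeBLift, PresentedGroup.toGroup.of]
  congr 1
  simp only
  omega

theorem isTypeBSeq_rB (n : ℕ) : IsTypeBSeq n fun k => rB n (n - k) where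
  four hn := by
    have h1 : n - 0 - 1 < n := by omega
    have h2 : n - 1 - 1 < n := by omega
    have := PresentedGroup.one_of_mem (rels := BnRels n) (Or.inr (Or.inl
      ⟨⟨n - 1 - 1, h2⟩, ⟨n - 0 - 1, h1⟩, by simp only; omega, by simp only; omega, rfl⟩))
    rw [map_mul, map_inv, mul_inv_eq_one] at this
    simp only [rB, dif_pos h1, dif_pos h2]
    exact this.symm
  braid i hi := by
    have h1 : n - (i + 1) - 1 < n := by omega
    have h2 : n - (i + 2) - 1 < n := by omega
    have := PresentedGroup.one_of_mem (rels := BnRels n) (Or.inl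
      ⟨⟨n - (i + 2) - 1, h2⟩, ⟨n - (i + 1) - 1, h1⟩, by simp only; omega, by simp only; omega, rfl⟩)
    rw [map_mul, map_inv, mul_inv_eq_one] at this
    simp only [rB, dif_pos h1, dif_pos h2]
    exact this.symm
  comm i j hij hj := by
    have h1 : n - i - 1 < n := by omega
    have h2 : n - j - 1 < n := by omega
    have := PresentedGroup.one_of_mem (rels := BnRels n) (Or.inr (Or.inr
      ⟨⟨n - j - 1, h2⟩, ⟨n - i - 1, h1⟩, by simp only; omega, rfl⟩))
    rw [map_mul, map_inv, mul_inv_eq_one] at this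
    simp only [rB, dif_pos h1, dif_pos h2]
    exact this.symm

theorem closure_rB (n : ℕ) :
    Subgroup.closure {x | ∃ k < n, x = rB n (n - k)} = (⊤ : Subgroup (ArtinB n)) := by
  rw [eq_top_iff, ← PresentedGroup.closure_range_of]
  apply Subgroup.closure_mono
  rintro _ ⟨i, rfl⟩
  refine ⟨n - 1 - i, by omega, ?_⟩
  have h : n - (n - 1 - i) - 1 < n := by omega
  rw [rB, dif_pos h]
  congr 1
  ext
  simp only
  omega

/-- The conjugates `x_k = (a_k ⋯ a_1) a_0 (a_k ⋯ a_1)⁻¹` of the special generator. -/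
def conjSeq {G : Type*} [Group G] (a : ℕ → G) : ℕ → G
  | 0 => a 0
  | k + 1 => a (k + 1) * conjSeq a k * (a (k + 1))⁻¹

variable {G : Type*} [Group G] {n : ℕ} {a : ℕ → G}

theorem IsTypeBSeq.commute_conjSeq_of_lt (h : IsTypeBSeq n a) {i : ℕ} (hi : i < n) :
    ∀ j, j + 2 ≤ i → Commute (a i) (conjSeq a j)
  | 0, hj => (h.comm 0 i hj hi).symm
  | j + 1, hj => by
    have h1 := h.commute_conjSeq_of_lt hi j (by omega)
    have h2 : Commute (a i) (a (j + 1)) := (h.comm (j + 1) i hj hi).symm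
    exact (h2.mul_right h1).mul_right h2.inv_right

theorem IsTypeBSeq.commute_conjSeq_of_gt (h : IsTypeBSeq n a) (i : ℕ) :
    ∀ k, i + 2 + k < n → Commute (a (i + 1)) (conjSeq a (i + 2 + k))
  | 0, hk => by
    have h1 : Commute (a (i + 2)) (conjSeq a i) := h.commute_conjSeq_of_lt hk i le_rfl
    have h2 := h.braid i hk
    have h3 : a (i + 1) * (a (i + 2) * a (i + 1)) = (a (i + 2) * a (i + 1)) * a (i + 2) := by
      rw [← h2, mul_assoc]
    have h4 : SemiconjBy (a (i + 2) * a (i + 1)) (a (i + 2)) (a (i + 1)) := h3.symm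
    have h5 : SemiconjBy (a (i + 2) * a (i + 1)) (conjSeq a i) (conjSeq a (i + 2)) := by
      simp [SemiconjBy, conjSeq, mul_assoc]
    have h6 := h1.map (MulAut.conj (a (i + 2) * a (i + 1)))
    rwa [MulAut.conj_apply, MulAut.conj_apply, h4.eq, h5.eq, mul_inv_cancel_right,
      mul_inv_cancel_right] at h6
  | k + 1, hk => by
    have h1 := h.commute_conjSeq_of_gt i k (by omega)
    have h2 : Commute (a (i + 1)) (a (i + 2 + k + 1)) := h.comm _ _ (by omega) hk
    exact (h2.mul_right h1).mul_right h2.inv_right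

theorem IsTypeBSeq.conjSeq_four (h : IsTypeBSeq n a) : ∀ i, i + 1 < n →
    conjSeq a i * a (i + 1) * conjSeq a i * a (i + 1) =
      a (i + 1) * conjSeq a i * a (i + 1) * conjSeq a i
  | 0, hi => h.four hi
  | i + 1, hi => by
    have h0 := h.conjSeq_four i (by omega)
    have h1 : Commute (a (i + 2)) (conjSeq a i) := h.commute_conjSeq_of_lt hi i le_rfl
    have h2 := h.braid i hi
    have h3 : MulAut.conj (a (i + 1) * a (i + 2)) (conjSeq a i) = conjSeq a (i + 1) := by
      simp only [MulAut.conj_apply, conjSeq, mul_inv_rev]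
      rw [mul_assoc (a (i + 1)), h1.eq]
      group
    have h4 : MulAut.conj (a (i + 1) * a (i + 2)) (a (i + 1)) = a (i + 2) := by
      rw [MulAut.conj_apply, h2]
      group
    have h5 := congrArg (MulAut.conj (a (i + 1) * a (i + 2))) h0
    generalize MulAut.conj (a (i + 1) * a (i + 2)) = c at h3 h4 h5
    simpa only [map_mul, h3, h4] using h5

theorem IsTypeBSeq.conj_conjSeq_succ (h : IsTypeBSeq n a) {i : ℕ} (hi : i + 1 < n) :
    a (i + 1) * conjSeq a (i + 1) * (a (i + 1))⁻¹ =
      (conjSeq a (i + 1))⁻¹ * conjSeq a i * conjSeq a (i + 1) := by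
  have h0 := h.conjSeq_four i hi
  simp only [conjSeq]
  generalize conjSeq a i = x at h0 ⊢
  generalize a (i + 1) = p at h0 ⊢
  have h1 : x * p * x = p * x * p * x * p⁻¹ := by rw [← h0]; group
  calc p * (p * x * p⁻¹) * p⁻¹ = p * x⁻¹ * p⁻¹ * (p * x * p * x * p⁻¹) * p⁻¹ := by group
    _ = p * x⁻¹ * p⁻¹ * (x * p * x) * p⁻¹ := by rw [h1]
    _ = _ := by group

end TypeBSequences

section Splitting

/-- The action of the Artin group of type `Bₙ` on the free group through the Artin
representation, with the special generator acting trivially. -/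
def artinAction (n : ℕ) : ArtinB n →* MulAut (FreeGroup ℕ) :=
  typeBLift (a := fun k => if k = 0 then 1 else artinAut (k - 1))
    { four := by simp
      braid := fun i _ => by simpa using artinAut_braid i
      comm := fun i j hij _ => by
        rcases i with _ | i
        · simp
        · have : j ≠ 0 := by omega
          simpa [this] using artinAut_commute (i := i) (j := j - 1) (by omega) }

theorem artinAction_zero {n : ℕ} (hn : 0 < n) : artinAction n (rB n n) = 1 :=
  typeBLift_rB (k := 0) _ hn

theorem artinAction_succ {n k : ℕ} (hk : k + 1 < n) :
    artinAction n (rB n (n - (k + 1))) = artinAut k :=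
  typeBLift_rB _ hk

/-- The endomorphism of the Artin group of type `Bₙ` killing the special generator and fixing the
others. -/
def killLast (n : ℕ) : ArtinB n →* ArtinB n :=
  typeBLift (a := fun k => if k = 0 then 1 else rB n (n - k))
    { four := by simp
      braid := fun i hi => by simpa using (isTypeBSeq_rB n).braid i hi
      comm := fun i j hij hj => by
        rcases i with _ | i
        · simp
        · have : j ≠ 0 := by omega
          simpa [this] using (isTypeBSeq_rB n).comm (i + 1) j hij hj }

theorem killLast_zero {n : ℕ} (hn : 0 < n) : killLast n (rB n n) = 1 :=
  typeBLift_rB (k := 0) _ hn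

theorem killLast_succ {n k : ℕ} (hk : k + 1 < n) :
    killLast n (rB n (n - (k + 1))) = rB n (n - (k + 1)) :=
  typeBLift_rB _ hk

/-- The homomorphism to the semidirect product sending the special generator to the basis element
`x₀` and every other generator to itself. -/
def toSemidirect (n : ℕ) : ArtinB n →* FreeGroup ℕ ⋊[artinAction n] ArtinB n :=
  typeBLift (a := fun k => if k = 0 then SemidirectProduct.inl (FreeGroup.of 0)
      else SemidirectProduct.inr (rB n (n - k)))
    { four := fun hn => by
        have h := artinAction_succ (n := n) (k := 0) hn
        ext
        · simp [h, artinAut_self, artinAut_succ 0, mul_assoc]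
        · simp
      braid := fun i hi => by
        have := congrArg (SemidirectProduct.inr (φ := artinAction n))
          ((isTypeBSeq_rB n).braid i hi)
        simpa using this
      comm := fun i j hij hj => by
        have hj0 : j ≠ 0 := by omega
        rcases i with _ | i
        · obtain ⟨j, rfl⟩ := Nat.exists_eq_add_of_le' (show 1 ≤ j by omega)
          have h := artinAction_succ (n := n) (k := j) hj
          have h2 : artinAut j (FreeGroup.of 0) = _ := artinAut_of_ne (by omega) (by omega)
          ext <;> simp [h, h2]
        · have := congrArg (SemidirectProduct.inr (φ := artinAction n))
            ((isTypeBSeq_rB n).comm (i + 1) j hij hj)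
          simpa [hj0] using this }

theorem toSemidirect_zero {n : ℕ} (hn : 0 < n) :
    toSemidirect n (rB n n) = SemidirectProduct.inl (FreeGroup.of 0) :=
  typeBLift_rB (k := 0) _ hn

theorem toSemidirect_succ {n k : ℕ} (hk : k + 1 < n) :
    toSemidirect n (rB n (n - (k + 1))) = SemidirectProduct.inr (rB n (n - (k + 1))) :=
  typeBLift_rB _ hk

/-- The homomorphism from the free group sending `x_k` to the corresponding conjugate of the
special generator. -/
def conjHom (n : ℕ) : FreeGroup ℕ →* ArtinB n :=
  FreeGroup.lift fun k => if k < n then conjSeq (fun k => rB n (n - k)) k else 1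

theorem conjHom_of {n k : ℕ} (hk : k < n) :
    conjHom n (FreeGroup.of k) = conjSeq (fun k => rB n (n - k)) k := by
  simp [conjHom, hk]

theorem conjHom_of_le {n k : ℕ} (hk : n ≤ k) : conjHom n (FreeGroup.of k) = 1 := by
  simp [conjHom, hk]

theorem conjHom_artinAut {n i : ℕ} (hi : i + 1 < n) :
    (conjHom n).comp (artinAut i).toMonoidHom =
      (MulAut.conj (rB n (n - (i + 1)))).toMonoidHom.comp (conjHom n) := by
  have H := isTypeBSeq_rB n
  ext k
  simp only [MonoidHom.comp_apply, MulEquiv.toMonoidHom_eq_coe, MonoidHom.coe_coe,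
    MulAut.conj_apply]
  rcases lt_or_ge k n with hk | hk
  · by_cases h1 : k = i
    · subst h1
      rw [artinAut_self, conjHom_of hk, conjHom_of hi]
      rfl
    by_cases h2 : k = i + 1
    · subst h2
      rw [artinAut_succ, map_mul, map_mul, map_inv, conjHom_of hk, conjHom_of (by omega)]
      exact (H.conj_conjSeq_succ hi).symm
    rw [artinAut_of_ne h1 h2, conjHom_of hk, eq_mul_inv_iff_mul_eq]
    rcases lt_or_gt_of_ne h1 with h3 | h3
    · exact (H.commute_conjSeq_of_lt hi k (by omega)).eq.symm
    · obtain ⟨m, rfl⟩ := Nat.exists_eq_add_of_le (show i + 2 ≤ k by omega)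
      exact (H.commute_conjSeq_of_gt i m hk).eq.symm
  · rw [artinAut_of_ne (by omega) (by omega), conjHom_of_le hk]
    simp

theorem conjHom_artinAction (n : ℕ) (g : ArtinB n) :
    (conjHom n).comp (artinAction n g).toMonoidHom =
      (MulAut.conj (killLast n g)).toMonoidHom.comp (conjHom n) := by
  suffices h : ∀ x, conjHom n (artinAction n g x) =
      killLast n g * conjHom n x * (killLast n g)⁻¹ by
    ext k
    simpa using h (FreeGroup.of k)
  have hg : g ∈ Subgroup.closure {x | ∃ k < n, x = rB n (n - k)} := by simp [closure_rB]
  induction hg using Subgroup.closure_induction with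
  | mem g hg =>
    obtain ⟨k, hk, rfl⟩ := hg
    intro x
    rcases k with _ | k
    · simp [artinAction_zero hk, killLast_zero hk]
    · rw [artinAction_succ hk, killLast_succ hk]
      exact DFunLike.congr_fun (conjHom_artinAut hk) x
  | one => simp
  | mul g h _ _ ihg ihh =>
    intro x
    rw [map_mul, MulAut.mul_apply, ihg, ihh, map_mul]
    group
  | inv g _ ih =>
    intro x
    have h := ih ((artinAction n g)⁻¹ x)
    rw [MulAut.apply_inv_self] at h
    rw [h, map_inv, map_inv]
    group

/-- The retraction of the semidirect product onto the Artin group of type `Bₙ`. -/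
def ofSemidirect (n : ℕ) : FreeGroup ℕ ⋊[artinAction n] ArtinB n →* ArtinB n :=
  SemidirectProduct.lift (conjHom n) (killLast n) (conjHom_artinAction n)

theorem toSemidirect_injective {n : ℕ} : Function.Injective (toSemidirect n) := by
  have h : (ofSemidirect n).comp (toSemidirect n) = MonoidHom.id _ := by
    apply MonoidHom.eq_of_eqOn_dense (closure_rB n)
    rintro _ ⟨k, hk, rfl⟩
    rcases k with _ | k
    · simp [toSemidirect_zero hk, ofSemidirect, conjHom_of hk, conjSeq]
    · simp [toSemidirect_succ hk, ofSemidirect, killLast_succ hk]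
  exact Function.LeftInverse.injective (g := ofSemidirect n) fun x => DFunLike.congr_fun h x

theorem toSemidirect_right {n : ℕ} (g : ArtinB n) : (toSemidirect n g).right = killLast n g := by
  have h : SemidirectProduct.rightHom.comp (toSemidirect n) = killLast n := by
    apply MonoidHom.eq_of_eqOn_dense (closure_rB n)
    rintro _ ⟨k, hk, rfl⟩
    rcases k with _ | k
    · simp [toSemidirect_zero hk, killLast_zero hk]
    · simp [toSemidirect_succ hk, killLast_succ hk]
  exact DFunLike.congr_fun h g

/-- An element of the kernel of `killLast` commuting with `[a₀, a₁]` and with its conjugate by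
`a₂` is trivial, where `a₀, a₁, a₂` are the last three generators in reverse order. -/
theorem eq_one_of_killLast_eq_one {n : ℕ} (hn : 3 ≤ n) {u : ArtinB n} (hu : killLast n u = 1)
    (h1 : Commute ⁅rB n n, rB n (n - 1)⁆ u)
    (h2 : Commute (rB n (n - 2) * ⁅rB n n, rB n (n - 1)⁆ * (rB n (n - 2))⁻¹) u) : u = 1 := by
  obtain ⟨f, hf⟩ : ∃ f, toSemidirect n u = SemidirectProduct.inl f := by
    refine ⟨(toSemidirect n u).left, ?_⟩
    ext
    · simp
    · simp [toSemidirect_right, hu]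
  have e0 := toSemidirect_zero (n := n) (by omega)
  have e1 : toSemidirect n (rB n (n - 1)) = _ := toSemidirect_succ (k := 0) (by omega)
  have e2 : toSemidirect n (rB n (n - 2)) = _ := toSemidirect_succ (k := 1) (by omega)
  have a1 : artinAction n (rB n (n - 1)) = _ := artinAction_succ (k := 0) (by omega)
  have a2 : artinAction n (rB n (n - 2)) = _ := artinAction_succ (k := 1) (by omega)
  have c1 : toSemidirect n ⁅rB n n, rB n (n - 1)⁆ =
      SemidirectProduct.inl (FreeGroup.of 0 * (FreeGroup.of 1)⁻¹) := by
    rw [map_commutatorElement, e0, e1, commutatorElement_def]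
    ext <;> simp [a1, artinAut_self 0]
  have c2 : toSemidirect n (rB n (n - 2) * ⁅rB n n, rB n (n - 1)⁆ * (rB n (n - 2))⁻¹) =
      SemidirectProduct.inl (FreeGroup.of 0 * (FreeGroup.of 2)⁻¹) := by
    have z : artinAut 1 (FreeGroup.of 0) = _ := artinAut_of_ne (by omega) (by omega)
    rw [map_mul, map_mul, map_inv, c1, e2]
    ext <;> simp [a2, artinAut_self 1, z]
  have k1 := h1.map (toSemidirect n)
  have k2 := h2.map (toSemidirect n)
  rw [c1, hf] at k1
  rw [c2, hf] at k2
  have hf1 : f = 1 := FreeGroup.eq_one_of_commute_of_mul_inv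
    (Commute.of_map SemidirectProduct.inl_injective k1)
    (Commute.of_map SemidirectProduct.inl_injective k2)
  apply toSemidirect_injective
  rw [hf, hf1, map_one, map_one]

end Splitting

theorem ρB_eq {n : ℕ} (hn : 0 < n) : ρB n = ρ₀B n * rB n n := by
  obtain ⟨m, rfl⟩ := Nat.exists_eq_add_of_le' (show 1 ≤ n by omega)
  simp [ρB, ρ₀B, List.range_succ]

/-- If `g` commutes with `z` and with `r⁻¹ z r`, then `z` commutes with `[g, r]`. -/
theorem commute_commutatorElement {G : Type*} [Group G] {g r z : G} (h1 : Commute g z)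
    (h2 : Commute g (r⁻¹ * z * r)) : Commute z ⁅g, r⁆ := by
  have h3 : g⁻¹ * (r⁻¹ * z * r) * g = r⁻¹ * z * r := by
    rw [mul_assoc, ← h2.eq, inv_mul_cancel_left]
  have h4 : g⁻¹ * z * g = z := by
    rw [mul_assoc, ← h1.eq, inv_mul_cancel_left]
  have h5 : g * (r⁻¹ * z * r) * g⁻¹ = r⁻¹ * z * r := by
    rw [h2.eq, mul_inv_cancel_right]
  have h6 : g * z * g⁻¹ = z := by
    rw [h1.eq, mul_inv_cancel_right]
  rw [commutatorElement_def]
  calc z * (g * r * g⁻¹ * r⁻¹) = g * z * g⁻¹ * (g * r * g⁻¹ * r⁻¹) := by rw [h6]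
    _ = g * r * (r⁻¹ * z * r) * g⁻¹ * r⁻¹ := by group
    _ = g * r * (g⁻¹ * (r⁻¹ * z * r) * g) * g⁻¹ * r⁻¹ := by rw [h3]
    _ = g * r * g⁻¹ * r⁻¹ * z := by group

/-- the centralizer in `A[Bₙ]` of the subgroup generated by
`t_0, …, t_{n-1}` (a copy of `A[Ã_{n-1}]`) equals the center of `A[Bₙ]`, `n ≥ 5`. -/
theorem centralizer_tilde_A_eq_center (n : ℕ) (hn : 5 ≤ n) :
    Subgroup.centralizer
        ((Subgroup.closure {x | ∃ i < n, x = tB n i} : Subgroup (ArtinB n)) :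
          Set (ArtinB n)) =
      Subgroup.center (ArtinB n) := by
  refine le_antisymm (fun g hg => ?_) (Subgroup.center_le_centralizer _)
  set N := Subgroup.closure {x | ∃ i < n, x = tB n i}
  have hgN : ∀ x ∈ N, Commute g x := fun x hx => (Subgroup.mem_centralizer_iff.1 hg x hx).symm
  have hN : ∀ i, 1 ≤ i → i < n → rB n i ∈ N := fun i h1 h2 =>
    Subgroup.subset_closure ⟨i, h2, by rw [tB, Nat.mod_eq_of_lt h2, if_neg (by omega)]⟩
  have ht0 : ρB n * rB n (n - 1) * (ρB n)⁻¹ ∈ N :=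
    Subgroup.subset_closure ⟨0, by omega, by simp [tB]⟩
  have hρ : ρ₀B n ∈ N := by
    apply Subgroup.list_prod_mem
    intro x hx
    obtain ⟨i, hi, rfl⟩ := List.mem_map.1 hx
    rw [List.mem_range] at hi
    exact hN _ (by omega) (by omega)
  have hs := hN (n - 1) (by omega) (by omega)
  have hq := hN (n - 2) (by omega) (by omega)
  have hrq : Commute (rB n n) (rB n (n - 2)) := (isTypeBSeq_rB n).comm 0 2 (by omega) (by omega)
  have hfour : rB n n * rB n (n - 1) * rB n n * rB n (n - 1) =
      rB n (n - 1) * rB n n * rB n (n - 1) * rB n n := (isTypeBSeq_rB n).four (by omega)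
  have hgr : Commute g (rB n n) := by
    have hker : killLast n ⁅g, rB n n⁆ = 1 := by
      rw [map_commutatorElement, killLast_zero (by omega), commutatorElement_one_right]
    have hK := eq_one_of_killLast_eq_one (by omega) hker
    rw [ρB_eq (by omega)] at ht0
    rw [← commutatorElement_eq_one_iff_commute]
    generalize rB n n = r at *
    generalize rB n (n - 1) = s at *
    generalize rB n (n - 2) = q at *
    have hs1 : r * s * r⁻¹ ∈ N := by
      have := N.mul_mem (N.mul_mem (N.inv_mem hρ) ht0) hρ
      simpa [mul_assoc] using this
    have hs2 : r⁻¹ * s * r ∈ N := by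
      have h : r⁻¹ * s * r = s * (r * s * r⁻¹) * s⁻¹ := by
        rw [eq_mul_inv_iff_mul_eq, mul_assoc, mul_assoc, inv_mul_eq_iff_eq_mul]
        calc s * (r * s) = s * r * s * r * r⁻¹ := by group
          _ = r * s * r * s * r⁻¹ := by rw [hfour]
          _ = r * (s * (r * s * r⁻¹)) := by group
      rw [h]
      exact N.mul_mem (N.mul_mem hs hs1) (N.inv_mem hs)
    have hy : ⁅r, s⁆ ∈ N := N.mul_mem hs1 (N.inv_mem hs)
    have hy' : r⁻¹ * ⁅r, s⁆ * r ∈ N := by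
      have h : r⁻¹ * ⁅r, s⁆ * r = s * (r⁻¹ * s * r)⁻¹ := by
        rw [commutatorElement_def]
        group
      rw [h]
      exact N.mul_mem hs (N.inv_mem hs2)
    have hconj : r⁻¹ * (q * ⁅r, s⁆ * q⁻¹) * r = q * (r⁻¹ * ⁅r, s⁆ * r) * q⁻¹ := by
      have h1 : r⁻¹ * q = q * r⁻¹ := hrq.inv_left.eq
      have h2 : q⁻¹ * r = r * q⁻¹ := hrq.inv_right.eq.symm
      calc r⁻¹ * (q * ⁅r, s⁆ * q⁻¹) * r = r⁻¹ * q * ⁅r, s⁆ * (q⁻¹ * r) := by group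
        _ = q * r⁻¹ * ⁅r, s⁆ * (r * q⁻¹) := by rw [h1, h2]
        _ = _ := by group
    apply hK
    · exact commute_commutatorElement (hgN _ hy) (hgN _ hy')
    · apply commute_commutatorElement
      · exact hgN _ (N.mul_mem (N.mul_mem hq hy) (N.inv_mem hq))
      · rw [hconj]
        exact hgN _ (N.mul_mem (N.mul_mem hq hy') (N.inv_mem hq))
  have htop : (⊤ : Subgroup (ArtinB n)) ≤ Subgroup.centralizer {g} := by
    rw [← closure_rB n, Subgroup.closure_le]
    rintro _ ⟨k, hk, rfl⟩
    rw [SetLike.mem_coe, Subgroup.mem_centralizer_singleton_iff]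
    rcases k with _ | k
    · exact hgr.eq.symm
    · exact (hgN _ (hN _ (by omega) (by omega))).eq.symm
  rw [Subgroup.mem_center_iff]
  exact fun x => Subgroup.mem_centralizer_singleton_iff.1 (htop (Subgroup.mem_top x))
end

section
/- Let n ≥ 5. Then the center of the quotient group Ā = A[B_n]/Z(A[B_n]) is trivial. -/
/-- The last letter of a nontrivial element of a free group which commutes with the generator `a`
is `a` or its inverse. -/
theorem FreeGroup.getLast_toWord_of_commute {α : Type*} [DecidableEq α] {w : FreeGroup α} {a : α}
    (h : Commute w (FreeGroup.of a)) (hw : w.toWord ≠ []) : (w.toWord.getLast hw).1 = a := by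
  by_contra hne
  have hred : FreeGroup.IsReduced (w.toWord ++ [(a, true)]) := by
    refine List.IsChain.append FreeGroup.isReduced_toWord (List.isChain_singleton _) ?_
    intro x hx y hy hxy
    rw [List.getLast?_eq_some_getLast hw] at hx
    simp only [Option.mem_def, Option.some.injEq, List.head?_cons] at hx hy
    subst hx hy
    exact absurd hxy hne
  have h1 : (w * FreeGroup.of a).toWord = w.toWord ++ [(a, true)] := by
    rw [FreeGroup.toWord_mul, FreeGroup.toWord_of, hred.reduce_eq]
  have h2 : (FreeGroup.of a * w).toWord.Sublist ((a, true) :: w.toWord) := by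
    simpa using FreeGroup.toWord_mul_sublist (FreeGroup.of a) w
  rw [← h.eq, h1] at h2
  have h3 := h2.eq_of_length (by simp)
  have h4 : (w.toWord ++ [(a, true)]).getLast (by simp) =
      ((a, true) :: w.toWord).getLast (by simp) := by simp only [h3]
  rw [List.getLast_append_singleton, List.getLast_cons hw] at h4
  exact hne (by rw [← h4])

/-- An element of a free group which commutes with two distinct generators is trivial. -/
theorem FreeGroup.eq_one_of_commute_of {α : Type*} [DecidableEq α] {w : FreeGroup α} {a b : α}
    (hab : a ≠ b) (ha : Commute w (FreeGroup.of a)) (hb : Commute w (FreeGroup.of b)) :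
    w = 1 := by
  by_contra hw
  have hw' : w.toWord ≠ [] := fun h => hw (FreeGroup.toWord_eq_nil_iff.1 h)
  exact hab ((FreeGroup.getLast_toWord_of_commute ha hw').symm.trans
    (FreeGroup.getLast_toWord_of_commute hb hw'))

/-- The relators of the braid group on `m` strands. The generators are indexed by `ℕ`, those of
index at least `m - 1` being killed. -/
def braidRels (m : ℕ) : Set (FreeGroup ℕ) :=
  {w | (∃ i, m ≤ i + 1 ∧ w = FreeGroup.of i) ∨
       (∃ i, i + 2 < m ∧
          w = FreeGroup.of i * FreeGroup.of (i + 1) * FreeGroup.of i *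
              (FreeGroup.of (i + 1) * FreeGroup.of i * FreeGroup.of (i + 1))⁻¹) ∨
       (∃ i j, i + 2 ≤ j ∧ j + 1 < m ∧
          w = FreeGroup.of i * FreeGroup.of j * (FreeGroup.of j * FreeGroup.of i)⁻¹)}

/-- The braid group on `m` strands. -/
abbrev Braid (m : ℕ) := PresentedGroup (braidRels m)

namespace Braid

variable {m : ℕ}

/-- The elementary braid exchanging the strands `i` and `i + 1`. -/
def σ (m i : ℕ) : Braid m := PresentedGroup.of i

theorem σ_eq_one {i : ℕ} (h : m ≤ i + 1) : σ m i = 1 :=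
  PresentedGroup.one_of_mem (Or.inl ⟨i, h, rfl⟩)

theorem σ_braid {i : ℕ} (h : i + 2 < m) :
    σ m i * σ m (i + 1) * σ m i = σ m (i + 1) * σ m i * σ m (i + 1) :=
  PresentedGroup.mk_eq_mk_of_mul_inv_mem (Or.inr (Or.inl ⟨i, h, rfl⟩))

theorem σ_comm {i j : ℕ} (h : i + 2 ≤ j) : Commute (σ m i) (σ m j) := by
  by_cases hj : j + 1 < m
  · exact PresentedGroup.mk_eq_mk_of_mul_inv_mem (Or.inr (Or.inr ⟨i, j, h, hj, rfl⟩))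
  · rw [σ_eq_one (not_lt.1 hj)]
    exact Commute.one_right _

/-- The morphism from the braid group defined by elements satisfying the braid relations. -/
def lift {G : Type*} [Group G] (s : ℕ → G)
    (h₁ : ∀ i, i + 2 < m → s i * s (i + 1) * s i = s (i + 1) * s i * s (i + 1))
    (h₂ : ∀ i j, i + 2 ≤ j → j + 1 < m → s i * s j = s j * s i) : Braid m →* G :=
  PresentedGroup.toGroup (f := fun i => if i + 1 < m then s i else 1) (by
    rintro r (⟨i, hi, rfl⟩ | ⟨i, hi, rfl⟩ | ⟨i, j, hij, hj, rfl⟩)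
    · simp [not_lt.2 hi]
    · have h : i + 1 < m := by lia
      have h' : i + 1 + 1 < m := by lia
      simp only [map_mul, map_inv, FreeGroup.lift_apply_of, h, h', if_true]
      rw [h₁ i hi, mul_inv_cancel]
    · have h : i + 1 < m := by lia
      simp only [map_mul, map_inv, FreeGroup.lift_apply_of, h, hj, if_true]
      rw [h₂ i j hij hj, mul_inv_cancel])

theorem lift_σ {G : Type*} [Group G] (s : ℕ → G)
    (h₁ : ∀ i, i + 2 < m → s i * s (i + 1) * s i = s (i + 1) * s i * s (i + 1))
    (h₂ : ∀ i j, i + 2 ≤ j → j + 1 < m → s i * s j = s j * s i) {i : ℕ} (hi : i + 1 < m) :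
    lift s h₁ h₂ (σ m i) = s i := by
  simp [lift, σ, hi]

theorem hom_ext {G : Type*} [Group G] {f g : Braid m →* G}
    (h : ∀ i, i + 1 < m → f (σ m i) = g (σ m i)) : f = g := by
  refine PresentedGroup.ext fun i => ?_
  by_cases hi : i + 1 < m
  · exact h i hi
  · change f (σ m i) = g (σ m i)
    rw [σ_eq_one (not_lt.1 hi), map_one, map_one]

theorem closure_σ : Subgroup.closure {z | ∃ i, i + 1 < m ∧ z = σ m i} = ⊤ := by
  refine top_unique ?_
  rw [← PresentedGroup.closure_range_of, Subgroup.closure_le]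
  rintro _ ⟨i, rfl⟩
  change σ m i ∈ _
  by_cases hi : i + 1 < m
  · exact Subgroup.subset_closure ⟨i, hi, rfl⟩
  · rw [σ_eq_one (not_lt.1 hi)]
    exact one_mem _

theorem induction {p : Braid m → Prop} (one : p 1)
    (mul : ∀ z i, i + 1 < m → p z → p (z * σ m i))
    (mul_inv : ∀ z i, i + 1 < m → p z → p (z * (σ m i)⁻¹)) (z : Braid m) : p z := by
  have hz : z ∈ Subgroup.closure {z | ∃ i, i + 1 < m ∧ z = σ m i} := by
    rw [closure_σ]
    trivial
  induction hz using Subgroup.closure_induction_right with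
  | one => exact one
  | mul_right x hx y hy ih => obtain ⟨i, hi, rfl⟩ := hy; exact mul _ _ hi ih
  | mul_inv_cancel x hx y hy ih => obtain ⟨i, hi, rfl⟩ := hy; exact mul_inv _ _ hi ih

/-- The exponent sum of a braid. -/
def expSum (m : ℕ) : Braid m →* Multiplicative ℤ :=
  lift (fun _ => Multiplicative.ofAdd 1) (fun _ _ => rfl) (fun _ _ _ _ => rfl)

theorem expSum_σ {i : ℕ} (hi : i + 1 < m) : expSum m (σ m i) = Multiplicative.ofAdd 1 :=
  lift_σ _ _ _ hi

end Braid

namespace ArtinB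

variable {n : ℕ}

/-- The standard generators of `A[Bₙ]`, indexed from `0`. -/
def R (n i : ℕ) : ArtinB n := rB n (i + 1)

theorem R_eq_of {i : ℕ} (hi : i < n) : R n i = PresentedGroup.of ⟨i, hi⟩ := by
  simp [R, rB, hi]

theorem R_braid {i : ℕ} (h : i + 2 < n) :
    R n i * R n (i + 1) * R n i = R n (i + 1) * R n i * R n (i + 1) := by
  rw [R_eq_of (by lia : i < n), R_eq_of (by lia : i + 1 < n)]
  exact PresentedGroup.mk_eq_mk_of_mul_inv_mem (Or.inl ⟨_, _, rfl, h, rfl⟩)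

theorem R_four {i : ℕ} (h : i + 2 = n) :
    R n i * R n (i + 1) * R n i * R n (i + 1) = R n (i + 1) * R n i * R n (i + 1) * R n i := by
  rw [R_eq_of (by lia : i < n), R_eq_of (by lia : i + 1 < n)]
  exact PresentedGroup.mk_eq_mk_of_mul_inv_mem
    (Or.inr (Or.inl ⟨⟨i, by lia⟩, ⟨i + 1, by lia⟩, h, h, rfl⟩))

theorem R_comm {i j : ℕ} (h : i + 2 ≤ j) (hj : j < n) : Commute (R n i) (R n j) := by
  rw [R_eq_of (by lia : i < n), R_eq_of hj]
  exact PresentedGroup.mk_eq_mk_of_mul_inv_mem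
    (Or.inr (Or.inr ⟨⟨i, by lia⟩, ⟨j, hj⟩, h, rfl⟩))

/-- The morphism from `A[Bₙ]` defined by elements satisfying the relations of type `Bₙ`. -/
def lift {G : Type*} [Group G] (s : ℕ → G)
    (h₁ : ∀ i, i + 2 < n → s i * s (i + 1) * s i = s (i + 1) * s i * s (i + 1))
    (h₂ : ∀ i, i + 2 = n → s i * s (i + 1) * s i * s (i + 1) = s (i + 1) * s i * s (i + 1) * s i)
    (h₃ : ∀ i j, i + 2 ≤ j → j < n → s i * s j = s j * s i) : ArtinB n →* G :=
  PresentedGroup.toGroup (f := fun i : Fin n => s i) (by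
    rintro r (⟨i, j, hij, hj, rfl⟩ | ⟨i, j, hi, hj, rfl⟩ | ⟨i, j, hij, rfl⟩) <;>
      simp only [map_mul, map_inv, FreeGroup.lift_apply_of]
    · rw [← hij, h₁ i (by lia), mul_inv_cancel]
    · rw [show (j : ℕ) = i + 1 by lia, h₂ i hi, mul_inv_cancel]
    · rw [h₃ i j hij j.2, mul_inv_cancel])

theorem lift_R {G : Type*} [Group G] (s : ℕ → G)
    (h₁ : ∀ i, i + 2 < n → s i * s (i + 1) * s i = s (i + 1) * s i * s (i + 1))
    (h₂ : ∀ i, i + 2 = n → s i * s (i + 1) * s i * s (i + 1) = s (i + 1) * s i * s (i + 1) * s i)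
    (h₃ : ∀ i j, i + 2 ≤ j → j < n → s i * s j = s j * s i) {i : ℕ} (hi : i < n) :
    lift s h₁ h₂ h₃ (R n i) = s i := by
  simp [lift, R_eq_of hi]

theorem hom_ext {G : Type*} [Group G] {f g : ArtinB n →* G}
    (h : ∀ i < n, f (R n i) = g (R n i)) : f = g :=
  PresentedGroup.ext fun i => by simpa [R_eq_of i.2] using h i i.2

theorem induction {p : ArtinB n → Prop} (gen : ∀ i < n, p (R n i)) (one : p 1)
    (mul : ∀ x y, p x → p y → p (x * y)) (inv : ∀ x, p x → p x⁻¹) (h : ArtinB n) : p h := by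
  have hh : h ∈ Subgroup.closure (Set.range (PresentedGroup.of (rels := BnRels n))) := by
    rw [PresentedGroup.closure_range_of]
    trivial
  induction hh using Subgroup.closure_induction with
  | mem x hx => obtain ⟨i, rfl⟩ := hx; simpa [R_eq_of i.2] using gen i i.2
  | one => exact one
  | mul x y _ _ hx hy => exact mul x y hx hy
  | inv x _ hx => exact inv x hx

/-- The conjugate of the last generator given by the loop around the strand `n - 1 - k`. -/
def loopAux (n : ℕ) : ℕ → ArtinB n
  | 0 => R n (n - 1)
  | k + 1 => R n (n - 2 - k) * loopAux n k * (R n (n - 2 - k))⁻¹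

/-- The free generators `x_i = (r_{i+1} ⋯ r_{n-1}) r_n (r_{i+1} ⋯ r_{n-1})⁻¹`, `i < n`, of the
kernel of the projection of `A[Bₙ]` to the braid group. -/
def x (n i : ℕ) : ArtinB n := if i < n then loopAux n (n - 1 - i) else 1

theorem x_last {i : ℕ} (h : i + 1 = n) : x n i = R n i := by
  subst h
  simp [x, loopAux]

theorem x_of_lt {i : ℕ} (h : i + 1 < n) : x n i = R n i * x n (i + 1) * (R n i)⁻¹ := by
  have h1 : n - 1 - i = (n - 1 - (i + 1)) + 1 := by lia
  have h2 : n - 2 - (n - 1 - (i + 1)) = i := by lia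
  rw [x, x, if_pos (by lia), if_pos h, h1, loopAux, h2]

theorem x_of_le {i : ℕ} (h : n ≤ i) : x n i = 1 := if_neg (by lia)

/-- Induction from the last strand downwards. -/
theorem down_induction {p : ℕ → Prop} (last : ∀ i, i + 1 = n → p i)
    (step : ∀ i, i + 1 < n → p (i + 1) → p i) {i : ℕ} (hi : i < n) : p i := by
  obtain ⟨k, hk⟩ := Nat.exists_eq_add_of_lt hi
  induction k generalizing i with
  | zero => exact last i (by lia)
  | succ k ih => exact step i (by lia) (ih (by lia) (by lia))

theorem R_mul_x_succ {i : ℕ} (h : i + 1 < n) : R n i * x n (i + 1) = x n i * R n i := by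
  rw [x_of_lt h]
  group

theorem R_comm_x_of_lt {i j : ℕ} (h : j + 1 < i) : Commute (R n j) (x n i) := by
  by_cases hi : i < n
  · revert h
    refine down_induction (p := fun i => j + 1 < i → Commute (R n j) (x n i)) ?_ ?_ hi
    · intro i hi h
      rw [x_last hi]
      exact R_comm h (by lia)
    · intro i hi ih h
      have h1 : Commute (R n j) (R n i) := R_comm h (by lia)
      rw [x_of_lt hi]
      exact (h1.mul_right (ih (by lia))).mul_right h1.inv_right
  · rw [x_of_le (not_lt.1 hi)]
    exact Commute.one_right _

theorem R_comm_x_of_gt {i j : ℕ} (h : i < j) (hj : j + 1 < n) : Commute (R n j) (x n i) := by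
  have hi : i < n := by lia
  revert h
  refine down_induction (p := fun i => i < j → Commute (R n j) (x n i)) ?_ ?_ hi
  · intro i hi h
    lia
  · intro i hi ih h
    obtain rfl | h' := eq_or_lt_of_le (Nat.succ_le_of_lt h)
    · have hR : R n (i + 1) =
          (R n i * R n (i + 1)) * R n i * (R n i * R n (i + 1))⁻¹ := by
        rw [R_braid (by lia)]
        group
      have hx : x n i = (R n i * R n (i + 1)) * x n (i + 2) * (R n i * R n (i + 1))⁻¹ := by
        rw [x_of_lt (by lia), x_of_lt (by lia)]
        group
      rw [Nat.succ_eq_add_one, hx]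
      nth_rw 1 [hR]
      exact Commute.conj_iff _ |>.2 (R_comm_x_of_lt (by lia))
    · have h1 : Commute (R n j) (R n i) := (R_comm h' (by lia)).symm
      rw [x_of_lt hi]
      exact (h1.mul_right (ih h')).mul_right h1.inv_right

theorem R_comm_x {i j : ℕ} (hj : j + 1 < n) (h : i ≠ j) (h' : i ≠ j + 1) :
    Commute (R n j) (x n i) := by
  obtain h | h := lt_or_gt_of_ne h
  · exact R_comm_x_of_gt h hj
  · exact R_comm_x_of_lt (by lia)

theorem R_comm_x_mul_x {j : ℕ} (hj : j + 1 < n) :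
    Commute (R n j) (x n (j + 1) * x n j) := by
  revert hj
  by_cases hj' : j < n
  swap
  · lia
  refine down_induction (p := fun j => j + 1 < n → Commute (R n j) (x n (j + 1) * x n j))
    ?_ ?_ hj'
  · intro j hj h
    lia
  · intro j hj ih _
    by_cases h2 : j + 2 = n
    · rw [x_of_lt hj, x_last (i := j + 1) h2]
      have h4 := R_four h2
      change _ = _
      calc R n j * (R n (j + 1) * (R n j * R n (j + 1) * (R n j)⁻¹))
          = R n j * R n (j + 1) * R n j * R n (j + 1) * (R n j)⁻¹ := by group
        _ = R n (j + 1) * R n j * R n (j + 1) * R n j * (R n j)⁻¹ := by rw [h4]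
        _ = _ := by group
    · have h3 : j + 2 < n := by lia
      have hR : R n j = (R n (j + 1) * R n j) * R n (j + 1) * (R n (j + 1) * R n j)⁻¹ := by
        rw [← R_braid h3]
        group
      have hx1 : x n (j + 1) = (R n (j + 1) * R n j) * x n (j + 2) * (R n (j + 1) * R n j)⁻¹ := by
        have h5 : Commute (R n j) (x n (j + 2)) := R_comm_x_of_lt (by lia)
        calc x n (j + 1) = R n (j + 1) * (x n (j + 2) * R n j) * (R n j)⁻¹ * (R n (j + 1))⁻¹ := by
              rw [x_of_lt h3]; group
          _ = _ := by rw [← h5.eq]; group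
      have hx0 : x n j = (R n (j + 1) * R n j) * x n (j + 1) * (R n (j + 1) * R n j)⁻¹ := by
        have h5 : Commute (R n (j + 1)) (x n j) := R_comm_x_of_gt (by lia) (by lia)
        calc x n j = x n j * R n (j + 1) * (R n (j + 1))⁻¹ := by group
          _ = R n (j + 1) * (R n j * x n (j + 1) * (R n j)⁻¹) * (R n (j + 1))⁻¹ := by
              rw [← h5.eq, x_of_lt hj]
          _ = _ := by group
      have hxx : x n (j + 1) * x n j = (R n (j + 1) * R n j) * (x n (j + 2) * x n (j + 1)) *
          (R n (j + 1) * R n j)⁻¹ := by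
        calc x n (j + 1) * x n j = (R n (j + 1) * R n j) * x n (j + 2) * (R n (j + 1) * R n j)⁻¹ *
              ((R n (j + 1) * R n j) * x n (j + 1) * (R n (j + 1) * R n j)⁻¹) := by
              rw [← hx1, ← hx0]
          _ = _ := by group
      rw [hxx]
      nth_rw 1 [hR]
      exact Commute.conj_iff _ |>.2 (ih h3)

theorem R_mul_x {j : ℕ} (hj : j + 1 < n) :
    R n j * x n j = (x n j)⁻¹ * x n (j + 1) * x n j * R n j := by
  have h := (R_comm_x_mul_x hj).eq
  rw [← mul_assoc, R_mul_x_succ hj] at h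
  rw [mul_assoc ((x n j)⁻¹), mul_assoc ((x n j)⁻¹), ← h]
  group

end ArtinB

namespace Braid

variable {m : ℕ}

open FreeGroup in
/-- The automorphism of the free group by which the elementary braid exchanging the strands `j` and
`j + 1` acts. -/
def freeAut (j : ℕ) : MulAut (FreeGroup ℕ) :=
  MonoidHom.toMulEquiv
    (FreeGroup.lift fun i =>
      if i = j then (of j)⁻¹ * of (j + 1) * of j else if i = j + 1 then of j else of i)
    (FreeGroup.lift fun i =>
      if i = j then of (j + 1) else if i = j + 1 then of (j + 1) * of j * (of (j + 1))⁻¹ else of i)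
    (by
      ext i
      by_cases h : i = j
      · subst h; simp [mul_assoc]
      · by_cases h' : i = j + 1
        · subst h'; simp
        · simp [h, h'])
    (by
      ext i
      by_cases h : i = j
      · subst h; simp
      · by_cases h' : i = j + 1
        · subst h'; simp [mul_assoc]
        · simp [h, h'])

theorem freeAut_of (i j : ℕ) : freeAut j (FreeGroup.of i) =
    if i = j then (FreeGroup.of j)⁻¹ * FreeGroup.of (j + 1) * FreeGroup.of j
    else if i = j + 1 then FreeGroup.of j else FreeGroup.of i := by
  simp [freeAut]

theorem mulAut_ext {f g : MulAut (FreeGroup ℕ)}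
    (h : ∀ i, f (FreeGroup.of i) = g (FreeGroup.of i)) : f = g := by
  have : f.toMonoidHom = g.toMonoidHom := FreeGroup.ext_hom _ _ h
  exact MulEquiv.ext fun w => DFunLike.congr_fun this w

theorem freeAut_braid (j : ℕ) :
    freeAut j * freeAut (j + 1) * freeAut j = freeAut (j + 1) * freeAut j * freeAut (j + 1) := by
  have h1 : j ≠ j + 1 + 1 := by lia
  refine mulAut_ext fun i => ?_
  by_cases h : i = j
  · subst h; simp [freeAut_of, mul_assoc, h1, h1.symm]
  · by_cases h' : i = j + 1
    · subst h'; simp [freeAut_of, h1, h1.symm]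
    · by_cases h'' : i = j + 1 + 1
      · subst h''; simp [freeAut_of, h1, h1.symm]
      · simp [freeAut_of, h, h', h'']

theorem freeAut_comm {j k : ℕ} (h : j + 2 ≤ k) :
    freeAut j * freeAut k = freeAut k * freeAut j := by
  have h1 : j ≠ k := by lia
  have h2 : j ≠ k + 1 := by lia
  have h3 : j + 1 ≠ k := by lia
  refine mulAut_ext fun i => ?_
  by_cases hi : i = j
  · subst hi; simp [freeAut_of, h1, h2, h3]
  · by_cases hi' : i = j + 1
    · subst hi'; simp [freeAut_of, h1, h2, h3]
    · by_cases hi'' : i = k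
      · subst hi''; simp [freeAut_of, h1.symm, h2.symm, h3.symm]
      · by_cases hi3 : i = k + 1
        · subst hi3; simp [freeAut_of, h1.symm, h2.symm, h3.symm]
        · simp [freeAut_of, hi, hi', hi'', hi3]

/-- The action of the braid group on the free group. The free generators of index at least `m` are
fixed. -/
def freeAction (m : ℕ) : Braid m →* MulAut (FreeGroup ℕ) :=
  lift freeAut (fun j _ => freeAut_braid j) (fun _ _ h _ => freeAut_comm h)

theorem freeAction_σ {j : ℕ} (hj : j + 1 < m) : freeAction m (σ m j) = freeAut j :=
  lift_σ _ _ _ hj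

end Braid

namespace ArtinB

open SemidirectProduct

variable {n : ℕ}

/-- The projection of `A[Bₙ]` to the braid group, killing the last generator. -/
def toBraid (n : ℕ) : ArtinB n →* Braid n :=
  lift (Braid.σ n) (fun _ h => Braid.σ_braid h)
    (fun i h => by rw [Braid.σ_eq_one (by lia : n ≤ i + 1 + 1)]; group)
    (fun _ _ h _ => Braid.σ_comm h)

theorem toBraid_R {i : ℕ} (hi : i < n) : toBraid n (R n i) = Braid.σ n i := lift_R _ _ _ _ hi

/-- The standard embedding of the braid group in `A[Bₙ]`. -/
def ofBraid (n : ℕ) : Braid n →* ArtinB n :=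
  Braid.lift (R n) (fun _ h => R_braid h) (fun _ _ h hj => R_comm h (by lia))

theorem ofBraid_σ {i : ℕ} (hi : i + 1 < n) : ofBraid n (Braid.σ n i) = R n i :=
  Braid.lift_σ _ _ _ hi

theorem toBraid_ofBraid (z : Braid n) : toBraid n (ofBraid n z) = z := by
  have : (toBraid n).comp (ofBraid n) = MonoidHom.id _ := Braid.hom_ext fun i hi => by
    simp [ofBraid_σ hi, toBraid_R (by lia : i < n)]
  exact DFunLike.congr_fun this z

/-- The morphism from `A[Bₙ]` to the semidirect product of a free group and the braid group. -/
def toSemidirect (n : ℕ) : ArtinB n →* FreeGroup ℕ ⋊[Braid.freeAction n] Braid n :=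
  lift (fun i => if i + 1 < n then inr (Braid.σ n i) else inl (FreeGroup.of i))
    (fun i h => by
      have h' : i + 1 < n := by lia
      have h'' : i + 1 + 1 < n := by lia
      simp only [h', h'', if_true, ← map_mul]
      rw [Braid.σ_braid h])
    (fun i h => by
      have h' : i + 1 < n := by lia
      have h'' : ¬ i + 1 + 1 < n := by lia
      simp only [h', h'', if_true, if_false]
      ext <;> simp [Braid.freeAction_σ h', Braid.freeAut_of, mul_assoc])
    (fun i j h hj => by
      have h' : i + 1 < n := by lia
      by_cases h'' : j + 1 < n
      · simp only [h', h'', if_true, ← map_mul]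
        rw [(Braid.σ_comm h).eq]
      · simp only [h', h'', if_true, if_false]
        have h1 : j ≠ i := by lia
        have h2 : j ≠ i + 1 := by lia
        ext <;> simp [Braid.freeAction_σ h', Braid.freeAut_of, h1, h2])

theorem toSemidirect_R {i : ℕ} (hi : i + 1 < n) :
    toSemidirect n (R n i) = inr (Braid.σ n i) :=
  (lift_R _ _ _ _ (by lia)).trans (if_pos hi)

theorem toSemidirect_x {i : ℕ} (hi : i < n) :
    toSemidirect n (x n i) = inl (FreeGroup.of i) := by
  refine down_induction (p := fun i => toSemidirect n (x n i) = inl (FreeGroup.of i)) ?_ ?_ hi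
  · intro i hi
    rw [x_last hi]
    exact (lift_R _ _ _ _ (by lia)).trans (if_neg (by lia))
  · intro i hi ih
    rw [x_of_lt hi, map_mul, map_mul, map_inv, ih, toSemidirect_R hi, ← map_inv, ← inl_aut,
      Braid.freeAction_σ hi, Braid.freeAut_of]
    simp

/-- The morphism from the semidirect product of a free group and the braid group to `A[Bₙ]`. -/
def ofSemidirect (n : ℕ) : FreeGroup ℕ ⋊[Braid.freeAction n] Braid n →* ArtinB n :=
  SemidirectProduct.lift (FreeGroup.lift (x n)) (ofBraid n) (by
    have key : ∀ z : Braid n, ∀ w, FreeGroup.lift (x n) (Braid.freeAction n z w) =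
        ofBraid n z * FreeGroup.lift (x n) w * (ofBraid n z)⁻¹ := by
      have hσ : ∀ i, i + 1 < n → ∀ w, FreeGroup.lift (x n) (Braid.freeAut i w) =
          R n i * FreeGroup.lift (x n) w * (R n i)⁻¹ := by
        intro i hi w
        have : (FreeGroup.lift (x n)).comp (Braid.freeAut i).toMonoidHom =
            (MulAut.conj (R n i)).toMonoidHom.comp (FreeGroup.lift (x n)) := by
          ext k
          simp only [MonoidHom.coe_comp, MulEquiv.toMonoidHom_eq_coe, MonoidHom.coe_coe,
            Function.comp_apply, Braid.freeAut_of, FreeGroup.lift_apply_of, MulAut.conj_apply]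
          rw [eq_mul_inv_iff_mul_eq]
          split_ifs with h h'
          · subst h
            simp [R_mul_x hi]
          · subst h'
            simp [R_mul_x_succ hi]
          · simp [(R_comm_x hi h h').eq]
        exact DFunLike.congr_fun this w
      intro z
      induction z using Braid.induction with
      | one => simp
      | mul z i hi ih =>
        intro w
        rw [map_mul, MulAut.mul_apply, ih, Braid.freeAction_σ hi, hσ i hi, map_mul, ofBraid_σ hi]
        group
      | mul_inv z i hi ih =>
        intro w
        have h := hσ i hi ((Braid.freeAut i)⁻¹ w)
        rw [MulAut.apply_inv_self] at h
        rw [map_mul, MulAut.mul_apply, ih, map_inv, Braid.freeAction_σ hi, map_mul, map_inv,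
          ofBraid_σ hi, h]
        group
    intro z
    ext i
    exact key z _)

theorem ofSemidirect_toSemidirect (h : ArtinB n) : ofSemidirect n (toSemidirect n h) = h := by
  have : (ofSemidirect n).comp (toSemidirect n) = MonoidHom.id _ := hom_ext fun i hi => by
    by_cases hi' : i + 1 < n
    · simp [toSemidirect_R hi', ofSemidirect, ofBraid_σ hi']
    · have h1 : i + 1 = n := by lia
      simp only [MonoidHom.coe_comp, Function.comp_apply, MonoidHom.id_apply]
      rw [← x_last h1, toSemidirect_x hi]
      simp [ofSemidirect]
  exact DFunLike.congr_fun this h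

theorem right_toSemidirect (h : ArtinB n) : (toSemidirect n h).right = toBraid n h := by
  have : rightHom.comp (toSemidirect n) = toBraid n := hom_ext fun i hi => by
    by_cases hi' : i + 1 < n
    · simp [toSemidirect_R hi', toBraid_R hi]
    · simp only [MonoidHom.coe_comp, Function.comp_apply]
      rw [toBraid_R hi, Braid.σ_eq_one (by lia), ← x_last (by lia : i + 1 = n), toSemidirect_x hi]
      simp
  exact DFunLike.congr_fun this h

/-- A central element of `A[Bₙ]` is trivial as soon as its projection to the braid group is. -/
theorem eq_one_of_toBraid_eq_one (hn : 2 ≤ n) {h : ArtinB n} (hc : h ∈ Subgroup.center (ArtinB n))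
    (hb : toBraid n h = 1) : h = 1 := by
  have hw : toSemidirect n h = inl (toSemidirect n h).left := by
    rw [← right_toSemidirect] at hb
    ext <;> simp [hb]
  have hcomm : ∀ i < n, Commute (toSemidirect n h).left (FreeGroup.of i) := by
    intro i hi
    have h1 := congrArg (toSemidirect n) (Subgroup.mem_center_iff.1 hc (x n i))
    rw [map_mul, map_mul, toSemidirect_x hi, hw, ← map_mul, ← map_mul] at h1
    exact (inl_injective h1).symm
  have h1 : (toSemidirect n h).left = 1 :=
    FreeGroup.eq_one_of_commute_of zero_ne_one (hcomm 0 (by lia)) (hcomm 1 (by lia))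
  rw [← ofSemidirect_toSemidirect h, hw, h1, map_one, map_one]

/-- The homomorphism counting the occurrences of the last generator. -/
def lastSum (n : ℕ) : ArtinB n →* Multiplicative ℤ :=
  lift (fun i => if i + 1 < n then 1 else Multiplicative.ofAdd 1)
    (fun i h => by simp [(by lia : i + 1 < n), (by lia : i + 1 + 1 < n)])
    (fun i h => by simp [(by lia : i + 1 < n), (by lia : ¬ i + 1 + 1 < n)])
    (fun i j h hj => mul_comm _ _)

theorem lastSum_R {i : ℕ} (hi : i + 1 < n) : lastSum n (R n i) = 1 :=
  (lift_R _ _ _ _ (by lia)).trans (if_pos hi)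

theorem lastSum_R_last {i : ℕ} (hi : i + 1 = n) :
    lastSum n (R n i) = Multiplicative.ofAdd 1 :=
  (lift_R _ _ _ _ (by lia)).trans (if_neg (by lia))

theorem lastSum_x {i : ℕ} (hi : i < n) : lastSum n (x n i) = Multiplicative.ofAdd 1 := by
  refine down_induction (p := fun i => lastSum n (x n i) = Multiplicative.ofAdd 1) ?_ ?_ hi
  · intro i hi
    rw [x_last hi, lastSum_R_last hi]
  · intro i hi ih
    simp [x_of_lt hi, ih]

end ArtinB

namespace Braid

open ArtinB

variable {m : ℕ}

/-- The braid in `A[Bₘ]` traced by the other strands when the elementary braid exchanging the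
strands `j` and `j + 1` is applied with the strand `i ≤ m` singled out. -/
def cocycle (m j i : ℕ) : ArtinB m :=
  if m < i then 1 else if i < j then R m (j - 1) else if i = j then x m j
  else if i = j + 1 then 1 else R m j

theorem cocycle_of_lt {j i : ℕ} (hj : j ≤ m) (h : i < j) : cocycle m j i = R m (j - 1) := by
  simp [cocycle, h, (by lia : ¬ m < i)]

theorem cocycle_self {j : ℕ} (hj : j ≤ m) : cocycle m j j = x m j := by
  simp [cocycle, not_lt.2 hj]

theorem cocycle_succ {j : ℕ} : cocycle m j (j + 1) = 1 := by
  simp [cocycle]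

theorem cocycle_of_gt {j i : ℕ} (hi : i ≤ m) (h : j + 1 < i) : cocycle m j i = R m j := by
  simp [cocycle, not_lt.2 hi, (by lia : ¬ i < j), (by lia : ¬ i = j), (by lia : ¬ i = j + 1)]

theorem cocycle_of_lt_right {j i : ℕ} (h : m < i) : cocycle m j i = 1 := by
  simp [cocycle, h]

/-- The permutation of `ℕ × A[Bₘ]` induced by an elementary braid. -/
def strandPerm (m j : ℕ) : Equiv.Perm (ℕ × ArtinB m) where
  toFun p := (Equiv.swap j (j + 1) p.1, cocycle m j p.1 * p.2)
  invFun p := (Equiv.swap j (j + 1) p.1, (cocycle m j (Equiv.swap j (j + 1) p.1))⁻¹ * p.2)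
  left_inv p := by simp
  right_inv p := by simp

theorem strandPerm_apply (j i : ℕ) (h : ArtinB m) :
    strandPerm m j (i, h) = (Equiv.swap j (j + 1) i, cocycle m j i * h) := rfl

theorem strandPerm_self {j : ℕ} (hj : j ≤ m) (h : ArtinB m) :
    strandPerm m j (j, h) = (j + 1, x m j * h) := by
  rw [strandPerm_apply, Equiv.swap_apply_left, cocycle_self hj]

theorem strandPerm_succ (j : ℕ) (h : ArtinB m) : strandPerm m j (j + 1, h) = (j, h) := by
  rw [strandPerm_apply, Equiv.swap_apply_right, cocycle_succ, one_mul]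

theorem strandPerm_of_lt {j i : ℕ} (hj : j ≤ m) (hi : i < j) (h : ArtinB m) :
    strandPerm m j (i, h) = (i, R m (j - 1) * h) := by
  rw [strandPerm_apply, Equiv.swap_apply_of_ne_of_ne (by lia) (by lia), cocycle_of_lt hj hi]

theorem strandPerm_of_gt {j i : ℕ} (hi : i ≤ m) (hj : j + 1 < i) (h : ArtinB m) :
    strandPerm m j (i, h) = (i, R m j * h) := by
  rw [strandPerm_apply, Equiv.swap_apply_of_ne_of_ne (by lia) (by lia), cocycle_of_gt hi hj]

theorem strandPerm_of_lt_right {j i : ℕ} (hj : j < m) (hi : m < i) (h : ArtinB m) :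
    strandPerm m j (i, h) = (i, h) := by
  rw [strandPerm_apply, Equiv.swap_apply_of_ne_of_ne (by lia) (by lia), cocycle_of_lt_right hi,
    one_mul]

theorem strandPerm_braid {j : ℕ} (hj : j + 1 < m) :
    strandPerm m j * strandPerm m (j + 1) * strandPerm m j =
      strandPerm m (j + 1) * strandPerm m j * strandPerm m (j + 1) := by
  refine Equiv.ext fun ⟨i, h⟩ => ?_
  simp only [Equiv.Perm.mul_apply]
  obtain hi | rfl | rfl | rfl | hi :
    i < j ∨ i = j ∨ i = j + 1 ∨ i = j + 1 + 1 ∨ j + 2 < i := by lia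
  · simp only [strandPerm_of_lt (m := m) (j := j) (i := i) (by lia) (by lia),
      strandPerm_of_lt (m := m) (j := j + 1) (i := i) (by lia) (by lia), ← mul_assoc]
    obtain ⟨k, rfl⟩ : ∃ k, j = k + 1 := ⟨j - 1, by lia⟩
    simp only [Nat.add_sub_cancel]
    rw [R_braid (by lia)]
  · simp only [strandPerm_self (m := m) (j := i) (by lia),
      strandPerm_self (m := m) (j := i + 1) (by lia),
      strandPerm_of_gt (m := m) (j := i) (i := i + 1 + 1) (by lia) (by lia),
      strandPerm_of_lt (m := m) (j := i + 1) (i := i) (by lia) (by lia), Nat.add_sub_cancel]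
    rw [← mul_assoc (x m (i + 1)), ← mul_assoc (R m i), (R_comm_x_mul_x hj).eq]
    simp only [mul_assoc]
  · simp only [strandPerm_self (m := m) (j := j) (by lia), strandPerm_succ,
      strandPerm_self (m := m) (j := j + 1) (by lia),
      strandPerm_of_gt (m := m) (j := j) (i := j + 1 + 1) (by lia) (by lia),
      strandPerm_of_lt (m := m) (j := j + 1) (i := j) (by lia) (by lia), Nat.add_sub_cancel,
      ← mul_assoc]
    rw [R_mul_x_succ hj]
  · simp only [strandPerm_succ,
      strandPerm_of_gt (m := m) (j := j) (i := j + 1 + 1) (by lia) (by lia),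
      strandPerm_of_lt (m := m) (j := j + 1) (i := j) (by lia) (by lia), Nat.add_sub_cancel]
  · by_cases him : i ≤ m
    · simp only [strandPerm_of_gt (m := m) (j := j) (i := i) (by lia) (by lia),
        strandPerm_of_gt (m := m) (j := j + 1) (i := i) (by lia) (by lia), ← mul_assoc]
      rw [R_braid (by lia)]
    · simp only [strandPerm_of_lt_right (m := m) (j := j) (i := i) (by lia) (by lia),
        strandPerm_of_lt_right (m := m) (j := j + 1) (i := i) (by lia) (by lia)]

theorem strandPerm_comm {j k : ℕ} (hjk : j + 2 ≤ k) (hk : k < m) :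
    strandPerm m j * strandPerm m k = strandPerm m k * strandPerm m j := by
  refine Equiv.ext fun ⟨i, h⟩ => ?_
  simp only [Equiv.Perm.mul_apply]
  obtain hi | rfl | rfl | hi | rfl | rfl | hi :
    i < j ∨ i = j ∨ i = j + 1 ∨ (j + 1 < i ∧ i < k) ∨ i = k ∨ i = k + 1 ∨ k + 1 < i := by lia
  · simp only [strandPerm_of_lt (m := m) (j := j) (i := i) (by lia) (by lia),
      strandPerm_of_lt (m := m) (j := k) (i := i) (by lia) (by lia), ← mul_assoc]
    rw [(R_comm (by lia : j - 1 + 2 ≤ k - 1) (by lia)).eq]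
  · simp only [strandPerm_self (m := m) (j := i) (by lia),
      strandPerm_of_lt (m := m) (j := k) (i := i) (by lia) (by lia),
      strandPerm_of_lt (m := m) (j := k) (i := i + 1) (by lia) (by lia), ← mul_assoc]
    rw [(R_comm_x_of_gt (by lia) (by lia)).eq]
  · simp only [strandPerm_succ, strandPerm_of_lt (m := m) (j := k) (i := j) (by lia) (by lia),
      strandPerm_of_lt (m := m) (j := k) (i := j + 1) (by lia) (by lia)]
  · simp only [strandPerm_of_gt (m := m) (j := j) (i := i) (by lia) (by lia),
      strandPerm_of_lt (m := m) (j := k) (i := i) (by lia) (by lia), ← mul_assoc]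
    rw [(R_comm (by lia : j + 2 ≤ k - 1) (by lia)).eq]
  · simp only [strandPerm_self (m := m) (j := i) (by lia),
      strandPerm_of_gt (m := m) (j := j) (i := i) (by lia) (by lia),
      strandPerm_of_gt (m := m) (j := j) (i := i + 1) (by lia) (by lia), ← mul_assoc]
    rw [(R_comm_x_of_lt (by lia)).eq]
  · simp only [strandPerm_succ, strandPerm_of_gt (m := m) (j := j) (i := k) (by lia) (by lia),
      strandPerm_of_gt (m := m) (j := j) (i := k + 1) (by lia) (by lia)]
  · by_cases him : i ≤ m
    · simp only [strandPerm_of_gt (m := m) (j := j) (i := i) (by lia) (by lia),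
        strandPerm_of_gt (m := m) (j := k) (i := i) (by lia) (by lia), ← mul_assoc]
      rw [(R_comm hjk hk).eq]
    · simp only [strandPerm_of_lt_right (m := m) (j := j) (i := i) (by lia) (by lia),
        strandPerm_of_lt_right (m := m) (j := k) (i := i) (by lia) (by lia)]

/-- The action of the braid group on `m + 1` strands induced by the left translations of `A[Bₘ]`,
which is the stabilizer of the last strand. -/
def strandAction (m : ℕ) : Braid (m + 1) →* Equiv.Perm (ℕ × ArtinB m) :=
  lift (strandPerm m) (fun _ h => strandPerm_braid (by lia))
    (fun _ _ h hj => strandPerm_comm h (by lia))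

theorem strandAction_σ {j : ℕ} (hj : j < m) : strandAction m (σ (m + 1) j) = strandPerm m j :=
  lift_σ _ _ _ (by lia)

theorem strandAction_mul_right (z : Braid (m + 1)) (i : ℕ) (h u : ArtinB m) :
    strandAction m z (i, h * u) =
      ((strandAction m z (i, h)).1, (strandAction m z (i, h)).2 * u) := by
  have key : Commute (strandAction m z) (Equiv.prodCongr (Equiv.refl ℕ) (Equiv.mulRight u)) := by
    have hσ : ∀ j, j < m → Commute (strandPerm m j)
        (Equiv.prodCongr (Equiv.refl ℕ) (Equiv.mulRight u)) := fun j hj =>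
      Equiv.ext fun p => by simp [strandPerm, mul_assoc]
    induction z using induction with
    | one => simp
    | mul z j hj ih =>
      rw [map_mul, strandAction_σ (by lia)]
      exact ih.mul_left (hσ j (by lia))
    | mul_inv z j hj ih =>
      rw [map_mul, map_inv, strandAction_σ (by lia)]
      exact ih.mul_left (hσ j (by lia)).inv_left
  exact DFunLike.congr_fun key.eq (i, h)

theorem strandAction_apply (z : Braid (m + 1)) (i : ℕ) (u : ArtinB m) :
    strandAction m z (i, u) = ((strandAction m z (i, 1)).1, (strandAction m z (i, 1)).2 * u) := by
  simpa using strandAction_mul_right z i 1 u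

/-- The embedding of `A[Bₘ]` in the braid group on `m + 1` strands as the stabilizer of the last
strand. -/
def ofArtinB (m : ℕ) : ArtinB m →* Braid (m + 1) :=
  ArtinB.lift (fun i => if i + 1 < m then σ (m + 1) i else σ (m + 1) i * σ (m + 1) i)
    (fun i h => by
      simp only [(by lia : i + 1 < m), (by lia : i + 1 + 1 < m), if_true]
      exact σ_braid (by lia))
    (fun i h => by
      simp only [(by lia : i + 1 < m), (by lia : ¬ i + 1 + 1 < m), if_true, if_false]
      have hb : σ (m + 1) i * σ (m + 1) (i + 1) * σ (m + 1) i =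
        σ (m + 1) (i + 1) * σ (m + 1) i * σ (m + 1) (i + 1) := σ_braid (by lia)
      generalize σ (m + 1) i = a at hb ⊢
      generalize σ (m + 1) (i + 1) = b at hb ⊢
      calc a * (b * b) * a * (b * b) = a * b * (b * a * b) * b := by group
        _ = a * b * (a * b * a) * b := by rw [hb]
        _ = (a * b * a) * (b * a * b) := by group
        _ = (b * a * b) * (a * b * a) := congrArg₂ (· * ·) hb hb.symm
        _ = b * (a * b * a) * b * a := by group
        _ = b * (b * a * b) * b * a := by rw [hb]
        _ = _ := by group)
    (fun i j h hj => by
      have h1 : Commute (σ (m + 1) i) (σ (m + 1) j) := σ_comm h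
      simp only [(by lia : i + 1 < m), if_true]
      split_ifs
      · exact h1.eq
      · exact (h1.mul_right h1).eq)

theorem ofArtinB_R {i : ℕ} (hi : i + 1 < m) : ofArtinB m (R m i) = σ (m + 1) i :=
  (ArtinB.lift_R _ _ _ _ (by lia)).trans (if_pos hi)

theorem ofArtinB_R_last {i : ℕ} (hi : i + 1 = m) :
    ofArtinB m (R m i) = σ (m + 1) i * σ (m + 1) i :=
  (ArtinB.lift_R _ _ _ _ (by lia)).trans (if_neg (by lia))

theorem strandAction_ofArtinB (u h : ArtinB m) :
    strandAction m (ofArtinB m u) (m, h) = (m, u * h) := by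
  induction u using ArtinB.induction generalizing h with
  | gen i hi =>
    by_cases hi' : i + 1 < m
    · rw [ofArtinB_R hi', strandAction_σ hi, strandPerm_of_gt le_rfl hi']
    · obtain rfl : i + 1 = m := by lia
      rw [ofArtinB_R_last rfl, map_mul, strandAction_σ hi, Equiv.Perm.mul_apply, strandPerm_succ,
        strandPerm_self (by lia), x_last rfl]
  | one => simp
  | mul u v hu hv => rw [map_mul, map_mul, Equiv.Perm.mul_apply, hv, hu, mul_assoc]
  | inv u hu => rw [map_inv, map_inv, Equiv.Perm.inv_eq_iff_eq, hu, mul_inv_cancel_left]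

/-- The braid moving the last strand to the position `m - k`. -/
def cosetRepAux (m : ℕ) : ℕ → Braid (m + 1)
  | 0 => 1
  | k + 1 => σ (m + 1) (m - 1 - k) * cosetRepAux m k

/-- The braid `σ_i σ_{i+1} ⋯ σ_{m-1}`, which moves the last strand to the position `i`. -/
def cosetRep (m i : ℕ) : Braid (m + 1) := cosetRepAux m (m - i)

theorem cosetRep_last : cosetRep m m = 1 := by
  simp [cosetRep, cosetRepAux]

theorem cosetRep_of_lt {i : ℕ} (h : i < m) :
    cosetRep m i = σ (m + 1) i * cosetRep m (i + 1) := by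
  rw [cosetRep, show m - i = (m - (i + 1)) + 1 by lia, cosetRepAux, cosetRep]
  congr 2
  lia

theorem strandAction_cosetRep {i : ℕ} (hi : i ≤ m) (h : ArtinB m) :
    strandAction m (cosetRep m i) (m, h) = (i, h) := by
  refine down_induction (n := m + 1)
    (p := fun i => strandAction m (cosetRep m i) (m, h) = (i, h)) ?_ ?_ (by lia : i < m + 1)
  · intro i hi
    obtain rfl : i = m := by lia
    simp [cosetRep_last]
  · intro i hi ih
    rw [cosetRep_of_lt (by lia), map_mul, Equiv.Perm.mul_apply, ih, strandAction_σ (by lia),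
      strandPerm_succ]

theorem σ_comm_cosetRep {i j : ℕ} (h : j + 1 < i) (hi : i ≤ m) :
    Commute (σ (m + 1) j) (cosetRep m i) := by
  revert h
  refine down_induction (n := m + 1)
    (p := fun i => j + 1 < i → Commute (σ (m + 1) j) (cosetRep m i)) ?_ ?_ (by lia : i < m + 1)
  · intro i hi _
    obtain rfl : i = m := by lia
    rw [cosetRep_last]
    exact Commute.one_right _
  · intro i hi ih h
    rw [cosetRep_of_lt (by lia)]
    exact (σ_comm h).mul_right (ih (by lia))

theorem σ_mul_cosetRep_of_lt {i j : ℕ} (hj : j + 1 < m) (h : i ≤ j) :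
    σ (m + 1) (j + 1) * cosetRep m i = cosetRep m i * σ (m + 1) j := by
  refine down_induction (n := j + 1)
    (p := fun i => σ (m + 1) (j + 1) * cosetRep m i = cosetRep m i * σ (m + 1) j) ?_ ?_
    (by lia : i < j + 1)
  · intro i hi
    obtain rfl : i = j := by lia
    have h1 : Commute (σ (m + 1) i) (cosetRep m (i + 1 + 1)) :=
      σ_comm_cosetRep (by lia) (by lia)
    rw [cosetRep_of_lt (by lia), cosetRep_of_lt hj, ← mul_assoc, ← mul_assoc, ← σ_braid (by lia),
      mul_assoc _ (σ _ i), h1.eq]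
    simp only [mul_assoc]
  · intro i hi ih
    have h1 : Commute (σ (m + 1) i) (σ (m + 1) (j + 1)) := σ_comm (by lia)
    rw [cosetRep_of_lt (by lia), ← mul_assoc, ← h1.eq, mul_assoc, ih, mul_assoc]

theorem σ_mul_cosetRep_self {j : ℕ} (hj : j < m) :
    σ (m + 1) j * cosetRep m j = cosetRep m (j + 1) * ofArtinB m (x m j) := by
  refine down_induction (n := m)
    (p := fun j => σ (m + 1) j * cosetRep m j = cosetRep m (j + 1) * ofArtinB m (x m j)) ?_ ?_ hj
  · intro j hj
    subst hj
    rw [cosetRep_of_lt (by lia), cosetRep_last, x_last rfl, ofArtinB_R_last rfl, mul_one, one_mul]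
  · intro j hj ih
    have h1 : Commute (σ (m + 1) j) (cosetRep m (j + 2)) := σ_comm_cosetRep (by lia) (by lia)
    have h2 := σ_braid (m := m + 1) (i := j) (by lia)
    rw [cosetRep_of_lt hj] at ih
    rw [x_of_lt hj, map_mul, map_mul, map_inv, ofArtinB_R hj, cosetRep_of_lt (i := j) (by lia),
      cosetRep_of_lt hj]
    change _ * (_ * cosetRep m (j + 2)) = cosetRep m (j + 2) * _ at ih
    change _ * (_ * (_ * cosetRep m (j + 2))) = _ * cosetRep m (j + 2) * _
    have h3 : ofArtinB m (x m (j + 1)) = (cosetRep m (j + 2))⁻¹ *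
      (σ (m + 1) (j + 1) * (σ (m + 1) (j + 1) * cosetRep m (j + 2))) := by rw [ih]; group
    rw [h3]
    generalize cosetRep m (j + 2) = s at h1 ⊢
    generalize σ (m + 1) j = a at h1 h2 ⊢
    generalize σ (m + 1) (j + 1) = b at h2 ⊢
    have h4 : s * a * s⁻¹ = a := by rw [← h1.eq]; group
    have h5 : s * a⁻¹ = a⁻¹ * s := h1.symm.inv_right.eq
    calc a * (a * (b * s)) = a * (a * b * a) * a⁻¹ * s := by group
      _ = a * (b * a * b) * a⁻¹ * s := by rw [h2]
      _ = (a * b * a) * b * a⁻¹ * s := by group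
      _ = (b * a * b) * b * a⁻¹ * s := by rw [h2]
      _ = b * a * b * b * (a⁻¹ * s) := by group
      _ = b * (s * a * s⁻¹) * b * b * (s * a⁻¹) := by rw [h4, h5]
      _ = _ := by group

theorem σ_mul_cosetRep {i j : ℕ} (hj : j < m) (hi : i ≤ m) :
    σ (m + 1) j * cosetRep m i =
      cosetRep m (Equiv.swap j (j + 1) i) * ofArtinB m (cocycle m j i) := by
  obtain h | rfl | rfl | h : i < j ∨ i = j ∨ i = j + 1 ∨ j + 1 < i := by lia
  · rw [Equiv.swap_apply_of_ne_of_ne (by lia) (by lia), cocycle_of_lt hj.le h]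
    obtain ⟨k, rfl⟩ : ∃ k, j = k + 1 := ⟨j - 1, by lia⟩
    rw [Nat.add_sub_cancel, ofArtinB_R hj, σ_mul_cosetRep_of_lt hj (by lia)]
  · rw [Equiv.swap_apply_left, cocycle_self hi, σ_mul_cosetRep_self hj]
  · rw [Equiv.swap_apply_right, cocycle_succ, map_one, mul_one, cosetRep_of_lt hj]
  · rw [Equiv.swap_apply_of_ne_of_ne (by lia) (by lia), cocycle_of_gt hi h, ofArtinB_R (by lia),
      (σ_comm_cosetRep h hi).eq]

theorem swap_le {i j : ℕ} (hj : j < m) (hi : i ≤ m) : Equiv.swap j (j + 1) i ≤ m := by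
  rw [Equiv.swap_apply_def]
  split_ifs <;> lia

theorem strandAction_equivariant (z : Braid (m + 1)) {p : ℕ × ArtinB m} (hp : p.1 ≤ m) :
    (strandAction m z p).1 ≤ m ∧ z * (cosetRep m p.1 * ofArtinB m p.2) =
      cosetRep m (strandAction m z p).1 * ofArtinB m (strandAction m z p).2 := by
  induction z using induction generalizing p with
  | one => simpa using hp
  | mul z j hj ih =>
    have h1 : (strandPerm m j p).1 ≤ m := swap_le (by lia) hp
    obtain ⟨h2, h3⟩ := ih h1
    rw [map_mul, Equiv.Perm.mul_apply, strandAction_σ (by lia)]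
    refine ⟨h2, ?_⟩
    rw [← h3, mul_assoc, ← mul_assoc (σ _ _), σ_mul_cosetRep (by lia) hp, mul_assoc, ← map_mul]
    rfl
  | mul_inv z j hj ih =>
    have h1 : ((strandPerm m j)⁻¹ p).1 ≤ m := swap_le (by lia) hp
    obtain ⟨h2, h3⟩ := ih h1
    rw [map_mul, Equiv.Perm.mul_apply, map_inv, strandAction_σ (by lia)]
    refine ⟨h2, ?_⟩
    rw [← h3, mul_assoc]
    congr 1
    rw [inv_mul_eq_iff_eq_mul, ← mul_assoc, σ_mul_cosetRep (by lia) h1, mul_assoc, ← map_mul]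
    have h4 : strandPerm m j ((strandPerm m j)⁻¹ p) = p := (strandPerm m j).apply_symm_apply p
    rw [Prod.ext_iff] at h4
    exact congrArg₂ (fun i h => cosetRep m i * ofArtinB m h) h4.1.symm h4.2.symm

theorem prod_lastSum_strandAction (z : Braid (m + 1)) :
    ∏ i ∈ Finset.range (m + 1), lastSum m (strandAction m z (i, 1)).2 = expSum (m + 1) z := by
  have key : ∀ (z : Braid (m + 1)) (j : ℕ), j < m →
      ∏ i ∈ Finset.range (m + 1), lastSum m (strandAction m (z * σ (m + 1) j) (i, 1)).2 =
      (∏ i ∈ Finset.range (m + 1), lastSum m (strandAction m z (i, 1)).2) *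
        Multiplicative.ofAdd 1 := by
    intro z j hj
    have h1 : ∀ i ∈ Finset.range (m + 1),
        lastSum m (strandAction m (z * σ (m + 1) j) (i, 1)).2 =
        lastSum m (strandAction m z (Equiv.swap j (j + 1) i, 1)).2 *
          if i = j then Multiplicative.ofAdd 1 else 1 := by
      intro i hi
      have hi' : i ≤ m := by simpa [Nat.lt_succ_iff] using hi
      rw [map_mul, Equiv.Perm.mul_apply, strandAction_σ hj, strandPerm_apply, mul_one,
        strandAction_apply, map_mul]
      congr 1
      obtain h | rfl | rfl | h : i < j ∨ i = j ∨ i = j + 1 ∨ j + 1 < i := by lia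
      · rw [cocycle_of_lt hj.le h, lastSum_R (by lia), if_neg (by lia)]
      · rw [cocycle_self hi', lastSum_x hj, if_pos rfl]
      · rw [cocycle_succ, map_one, if_neg (by lia)]
      · rw [cocycle_of_gt hi' h, lastSum_R (by lia), if_neg (by lia)]
    rw [Finset.prod_congr rfl h1, Finset.prod_mul_distrib, Finset.prod_ite_eq',
      if_pos (Finset.mem_range.2 (by lia)),
      Equiv.Perm.prod_comp (Equiv.swap j (j + 1)) (Finset.range (m + 1))
        (fun i => lastSum m (strandAction m z (i, 1)).2)]
    intro i hi
    by_contra h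
    simp only [Finset.coe_range, Set.mem_Iio, not_lt] at h
    exact hi (Equiv.swap_apply_of_ne_of_ne (by lia) (by lia))
  induction z using induction with
  | one => simp
  | mul z j hj ih => rw [key z j (by lia), ih, map_mul, expSum_σ hj]
  | mul_inv z j hj ih =>
    have h := key (z * (σ (m + 1) j)⁻¹) j (by lia)
    rw [inv_mul_cancel_right, ih] at h
    rw [map_mul (expSum (m + 1)), map_inv (expSum (m + 1)), expSum_σ hj, h, mul_inv_cancel_right]

theorem expSum_ofArtinB (h : ArtinB m) :
    expSum (m + 1) (ofArtinB m h) = lastSum m h ^ 2 * expSum m (toBraid m h) := by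
  have : (expSum (m + 1)).comp (ofArtinB m) =
      (powMonoidHom 2).comp (lastSum m) * (expSum m).comp (toBraid m) :=
    ArtinB.hom_ext fun i hi => by
      by_cases hi' : i + 1 < m
      · simp [ofArtinB_R hi', lastSum_R hi', toBraid_R hi, expSum_σ hi',
          expSum_σ (by lia : i + 1 < m + 1)]
      · simp [ofArtinB_R_last (by lia : i + 1 = m), lastSum_R_last (by lia : i + 1 = m),
          toBraid_R hi, σ_eq_one (not_lt.1 hi'), expSum_σ (by lia : i + 1 < m + 1), pow_two]
  exact DFunLike.congr_fun this h

theorem strandAction_last_of_mem_center (hm : 2 ≤ m) {z : Braid (m + 1)}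
    (hz : z ∈ Subgroup.center (Braid (m + 1))) : (strandAction m z (m, 1)).1 = m := by
  set k := (strandAction m z (m, 1)).1 with hk
  have hkm : k ≤ m := (strandAction_equivariant z (p := (m, 1)) le_rfl).1
  have hfix : ∀ j, j + 1 < m → Equiv.swap j (j + 1) k = k := by
    intro j hj
    have h1 := DFunLike.congr_fun (congrArg (strandAction m)
      (Subgroup.mem_center_iff.1 hz (σ (m + 1) j))) (m, 1)
    rw [map_mul, map_mul, Equiv.Perm.mul_apply, Equiv.Perm.mul_apply, strandAction_σ (by lia),
      strandPerm_of_gt le_rfl hj, strandAction_apply z m (R m j * 1)] at h1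
    exact congrArg Prod.fst h1
  by_contra hne
  obtain h | h : k + 1 < m ∨ k + 1 = m := by lia
  · have := hfix k h
    rw [Equiv.swap_apply_left] at this
    lia
  · have := hfix (k - 1) (by lia)
    rw [show k - 1 + 1 = k by lia, Equiv.swap_apply_right] at this
    lia

/-- A central braid of exponent sum zero on at least two strands is trivial. -/
theorem eq_one_of_mem_center (hm : 2 ≤ m) {z : Braid m} (hz : z ∈ Subgroup.center (Braid m))
    (he : expSum m z = 1) : z = 1 := by
  induction m, hm using Nat.le_induction with
  | base =>
    have key : ∃ k : ℤ, z = σ 2 0 ^ k := by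
      clear hz he
      induction z using induction with
      | one => exact ⟨0, by simp⟩
      | mul z i hi ih =>
        obtain ⟨k, rfl⟩ := ih
        obtain rfl : i = 0 := by lia
        exact ⟨k + 1, (zpow_add_one _ _).symm⟩
      | mul_inv z i hi ih =>
        obtain ⟨k, rfl⟩ := ih
        obtain rfl : i = 0 := by lia
        exact ⟨k - 1, (zpow_sub_one _ _).symm⟩
    obtain ⟨k, rfl⟩ := key
    rw [map_zpow, expSum_σ (by lia), ← ofAdd_zsmul, ofAdd_eq_one] at he
    have hk : k = 0 := by simpa using he
    rw [hk, zpow_zero]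
  | succ m hm ih =>
    set h := (strandAction m z (m, 1)).2 with hh
    have hzm : strandAction m z (m, 1) = (m, h) :=
      Prod.ext (strandAction_last_of_mem_center hm hz) rfl
    have hzh : z = ofArtinB m h := by
      have := (strandAction_equivariant z (p := (m, 1)) le_rfl).2
      simpa [hzm, cosetRep_last] using this
    have hcenter : h ∈ Subgroup.center (ArtinB m) := by
      refine Subgroup.mem_center_iff.2 fun u => ?_
      have h1 := DFunLike.congr_fun (congrArg (strandAction m)
        (Subgroup.mem_center_iff.1 hz (ofArtinB m u))) (m, 1)
      rw [map_mul, map_mul, Equiv.Perm.mul_apply, Equiv.Perm.mul_apply, hzm,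
        strandAction_ofArtinB, strandAction_ofArtinB, mul_one, strandAction_apply z, hzm] at h1
      exact congrArg Prod.snd h1
    have hstrand : ∀ i ∈ Finset.range (m + 1),
        lastSum m (strandAction m z (i, 1)).2 = lastSum m h := by
      intro i hi
      have hi' : i ≤ m := by simpa [Nat.lt_succ_iff] using hi
      rw [← strandAction_cosetRep hi' 1, ← Equiv.Perm.mul_apply, ← map_mul,
        ← Subgroup.mem_center_iff.1 hz, map_mul, Equiv.Perm.mul_apply, hzm,
        strandAction_cosetRep hi']
    have hlast : lastSum m h = 1 := by
      have h1 := prod_lastSum_strandAction z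
      rw [Finset.prod_congr rfl hstrand, Finset.prod_const, Finset.card_range, he] at h1
      exact pow_eq_one_iff_left (by lia) |>.1 h1
    have hexp : expSum m (toBraid m h) = 1 := by
      have h1 := expSum_ofArtinB h
      rwa [← hzh, he, hlast, one_pow, one_mul, eq_comm] at h1
    have hbraid : toBraid m h ∈ Subgroup.center (Braid m) := by
      refine Subgroup.mem_center_iff.2 fun y => ?_
      have h1 := congrArg (toBraid m) (Subgroup.mem_center_iff.1 hcenter (ofBraid m y))
      simpa [toBraid_ofBraid] using h1
    rw [hzh, eq_one_of_toBraid_eq_one hm hcenter (ih hbraid hexp), map_one]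

end Braid

open scoped commutatorElement in
/-- The only central commutator of `A[Bₙ]` is the identity. -/
theorem ArtinB.commutator_eq_one_of_mem_center {n : ℕ} (hn : 2 ≤ n) {g h : ArtinB n}
    (hc : ⁅g, h⁆ ∈ Subgroup.center (ArtinB n)) : ⁅g, h⁆ = 1 := by
  refine eq_one_of_toBraid_eq_one hn hc (Braid.eq_one_of_mem_center hn ?_ ?_)
  · refine Subgroup.mem_center_iff.2 fun y => ?_
    have h1 := congrArg (toBraid n) (Subgroup.mem_center_iff.1 hc (ofBraid n y))
    simpa [toBraid_ofBraid] using h1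
  · rw [map_commutatorElement, map_commutatorElement, commutatorElement_eq_one_iff_mul_comm]
    exact mul_comm _ _

/-- the quotient `Ā = A[Bₙ]/Z(A[Bₙ])` has trivial center, `n ≥ 5`. -/
theorem quotient_center_trivial (n : ℕ) (hn : 5 ≤ n) :
    Subgroup.center (AbarB n) = ⊥ := by
  rw [eq_bot_iff]
  intro y hy
  obtain ⟨g, rfl⟩ := QuotientGroup.mk_surjective y
  rw [Subgroup.mem_bot, QuotientGroup.eq_one_iff, Subgroup.mem_center_iff]
  intro h
  refine (commutatorElement_eq_one_iff_mul_comm.1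
    (ArtinB.commutator_eq_one_of_mem_center (by lia : 2 ≤ n) ?_)).symm
  rw [← QuotientGroup.eq_one_iff, ← QuotientGroup.mk'_apply, map_commutatorElement,
    commutatorElement_eq_one_iff_mul_comm]
  exact (Subgroup.mem_center_iff.1 hy (h : AbarB n)).symm
end
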